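/- Let n ≥ 2 and suppose G ⊂ ℝⁿ is a bounded domain satisfying a β-quasihyperbolic boundary condition with 1 - 2/n ≤ β ≤ 1, and let 1 ≤ q < 2. If the characterization holds that the Neumann problem L_A u = f on G is q-solvable if and only if G supports a (q,2)-Poincaré inequality, then the Neumann problem on G is q-solvable. -/

import Mathlib

open MeasureTheory ENNReal

/-- The quasihyperbolic distance `k_G(x, y) = inf_γ ∫_γ ds / dist(z, ∂G)`, the infimum
being over rectifiable curves in `G` from `x` to `y`, parametrized by arc length
(encoded as `1`-Lipschitz parametrizations). -/
noncomputable def qhDist {n : ℕ} (G : Set (EuclideanSpace ℝ (Fin n)))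
    (x y : EuclideanSpace ℝ (Fin n)) : ℝ :=
  sInf {v : ℝ | ∃ (L : ℝ) (γ : ℝ → EuclideanSpace ℝ (Fin n)), 0 ≤ L ∧
    LipschitzWith 1 γ ∧ γ 0 = x ∧ γ L = y ∧ (∀ t ∈ Set.Icc (0:ℝ) L, γ t ∈ G) ∧
    v = ∫ t in (0:ℝ)..L, 1 / Metric.infDist (γ t) (frontier G)}

/-- `G` satisfies a `β`-quasihyperbolic boundary condition with base point `x₀` and
constant `c`: `k_G(x, x₀) ≤ (1/β) log(1/dist(x, ∂G)) + c` for all `x ∈ G`. -/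
def QHBCWith {n : ℕ} (G : Set (EuclideanSpace ℝ (Fin n))) (β : ℝ)
    (x₀ : EuclideanSpace ℝ (Fin n)) (c : ℝ) : Prop :=
  ∀ x ∈ G, qhDist G x x₀ ≤ (1 / β) * Real.log (1 / Metric.infDist x (frontier G)) + c

/-- `G` satisfies a `β`-quasihyperbolic boundary condition. -/
def QHBC {n : ℕ} (G : Set (EuclideanSpace ℝ (Fin n))) (β : ℝ) : Prop :=
  ∃ x₀ ∈ G, ∃ c : ℝ, QHBCWith G β x₀ c

/-- `G` supports the `(q,p)`-Poincaré inequality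
`(∫_G |u - u_G|^q)^{1/q} ≤ c (∫_G |∇u|^p)^{1/p}` for Sobolev functions on `G`. -/
def SupportsPoincare {n : ℕ} (G : Set (EuclideanSpace ℝ (Fin n))) (q p : ℝ) : Prop :=
  ∃ c : ℝ, ∀ u : EuclideanSpace ℝ (Fin n) → ℝ,
    DifferentiableOn ℝ u G → IntegrableOn u G volume →
    IntegrableOn (fun x => ‖fderivWithin ℝ u G x‖ ^ p) G volume →
    (∫ x in G, |u x - (∫ y in G, u y) / (volume G).toReal| ^ q) ^ (1 / q)
      ≤ c * (∫ x in G, ‖fderivWithin ℝ u G x‖ ^ p) ^ (1 / p)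

section Helpers

open Set Filter Topology

abbrev EE (n : ℕ) := EuclideanSpace ℝ (Fin n)

structure DomF {n : ℕ} (G : Set (EE n)) (δ : EE n → ℝ) (D : ℝ) : Prop where
  isOpen : IsOpen G
  lip : ∀ x y, δ x ≤ δ y + dist x y
  pos : ∀ x ∈ G, 0 < δ x
  ball : ∀ x ∈ G, Metric.ball x (δ x) ⊆ G
  le : ∀ x ∈ G, δ x ≤ D
  diam : ∀ x ∈ G, ∀ y ∈ G, dist x y ≤ D
  one : 1 ≤ D

theorem domF_of {n : ℕ} (hn : 2 ≤ n) (G : Set (EE n)) (hGo : IsOpen G) (hGc : IsConnected G)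
    (hGb : Bornology.IsBounded G) :
    ∃ D, DomF G (fun x => Metric.infDist x (frontier G)) D := by
  have : Nonempty (Fin n) := ⟨⟨0, by omega⟩⟩
  have hne : (frontier G).Nonempty := by
    rw [nonempty_frontier_iff]
    refine ⟨hGc.nonempty, ?_⟩
    rintro rfl
    exact NormedSpace.unbounded_univ ℝ (EE n) hGb
  have hdisj : ∀ x ∈ G, x ∉ frontier G := by
    intro x hx hx'
    exact (Set.disjoint_left.1 (disjoint_frontier_iff_isOpen.2 hGo)) hx' hx
  obtain ⟨x0, hx0⟩ := hGc.nonempty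
  obtain ⟨C, hC⟩ := (Metric.isBounded_iff).1 (hGb.closure)
  obtain ⟨z, hz⟩ := hne
  refine ⟨max 1 C, hGo, ?_, ?_, ?_, ?_, ?_, le_max_left _ _⟩
  · intro x y
    exact Metric.infDist_le_infDist_add_dist
  · intro x hx
    exact (isClosed_frontier.notMem_iff_infDist_pos ⟨z, hz⟩).1 (hdisj x hx)
  · intro x hx
    rcases le_or_gt (Metric.infDist x (frontier G)) 0 with h | h
    · simp [Metric.ball_eq_empty.2 h]
    refine IsPreconnected.subset_left_of_subset_union (v := (closure G)ᶜ) hGo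
      isClosed_closure.isOpen_compl ?_ ?_ ?_ (convex_ball x _).isPreconnected
    · exact Set.disjoint_left.2 fun y hy hy' => hy' (subset_closure hy)
    · intro y hy
      by_cases hyc : y ∈ closure G
      · left
        by_contra hyG
        have : y ∈ frontier G := ⟨hyc, by rwa [hGo.interior_eq]⟩
        have h1 := Metric.infDist_le_dist_of_mem (x := x) this
        rw [Metric.mem_ball, dist_comm] at hy
        linarith
      · right; exact hyc
    · exact ⟨x, Metric.mem_ball_self h, hx⟩
  · intro x hx
    refine (Metric.infDist_le_dist_of_mem (x := x) hz).trans ((hC ?_ ?_).trans (le_max_right _ _))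
    · exact subset_closure hx
    · exact hz.1
  · intro x hx y hy
    exact (hC (subset_closure hx) (subset_closure hy)).trans (le_max_right _ _)

/-- A curve in `G` from `x` to `y` of length `L` with `q`-cost `v`. -/
def Crv {n : ℕ} (G : Set (EE n)) (δ : EE n → ℝ) (x y : EE n) (v : ℝ) : Prop :=
  ∃ (L : ℝ) (γ : ℝ → EE n), 0 ≤ L ∧ LipschitzWith 1 γ ∧ γ 0 = x ∧ γ L = y ∧
    (∀ t, γ t ∈ G) ∧ v = ∫ t in (0:ℝ)..L, 1 / δ (γ t)

theorem DomF.cont {n : ℕ} {G : Set (EE n)} {δ : EE n → ℝ} {D : ℝ} (h : DomF G δ D) :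
    Continuous δ := by
  have : LipschitzWith 1 δ := LipschitzWith.of_le_add fun x y => h.lip x y
  exact this.continuous

theorem DomF.cont1 {n : ℕ} {G : Set (EE n)} {δ : EE n → ℝ} {D : ℝ} (h : DomF G δ D)
    {γ : ℝ → EE n} (hγ : Continuous γ) (hG : ∀ t, γ t ∈ G) :
    Continuous (fun t => 1 / δ (γ t)) :=
  continuous_const.div (h.cont.comp hγ) fun t => (h.pos _ (hG t)).ne'

theorem clamp_lip (L : ℝ) : LipschitzWith 1 (fun t : ℝ => max 0 (min t L)) := by
  exact (LipschitzWith.id.min_const L).const_max 0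

theorem clamp_crv {n : ℕ} {G : Set (EE n)} {δ : EE n → ℝ} {x y : EE n} {v : ℝ} {L : ℝ}
    {γ : ℝ → EE n} (hL : 0 ≤ L) (hl : LipschitzWith 1 γ) (h0 : γ 0 = x) (h1 : γ L = y)
    (hG : ∀ t ∈ Set.Icc (0:ℝ) L, γ t ∈ G) (hv : v = ∫ t in (0:ℝ)..L, 1 / δ (γ t)) :
    Crv G δ x y v := by
  refine ⟨L, fun t => γ (max 0 (min t L)), hL, ?_, ?_, ?_, ?_, ?_⟩
  · have := hl.comp (clamp_lip L)
    rw [one_mul] at this; exact this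
  · simp [hL, h0]
  · simp [hL, h1]
  · intro t
    apply hG
    exact ⟨le_max_left _ _, max_le hL (min_le_right _ _)⟩
  · rw [hv]
    apply intervalIntegral.integral_congr
    intro t ht
    rw [uIcc_of_le hL] at ht
    simp [ht.1, ht.2]

theorem Crv.concat {n : ℕ} {G : Set (EE n)} {δ : EE n → ℝ} {D : ℝ} (h : DomF G δ D)
    {x y z : EE n} {v w : ℝ} (h1 : Crv G δ x y v) (h2 : Crv G δ y z w) :
    Crv G δ x z (v + w) := by
  obtain ⟨L, γ, hL, hl, h0, h1, hG, rfl⟩ := h1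
  obtain ⟨L', η, hL', hl', h0', h1', hG', rfl⟩ := h2
  have hlip : LipschitzWith 1 (fun t => if t ≤ L then γ t else η (t - L)) := by
    refine LipschitzWith.of_dist_le_mul ?_
    have key : ∀ s t : ℝ, s ≤ t → dist ((fun t => if t ≤ L then γ t else η (t - L)) s)
        ((fun t => if t ≤ L then γ t else η (t - L)) t) ≤ t - s := by
      intro s t hst
      have e1 : ∀ a b, a ≤ b → dist (γ a) (γ b) ≤ b - a := by
        intro a b hab
        have := hl.dist_le_mul a b
        rw [Real.dist_eq, abs_sub_comm, abs_of_nonneg (by linarith)] at this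
        simpa using this
      have e2 : ∀ a b, a ≤ b → dist (η a) (η b) ≤ b - a := by
        intro a b hab
        have := hl'.dist_le_mul a b
        rw [Real.dist_eq, abs_sub_comm, abs_of_nonneg (by linarith)] at this
        simpa using this
      by_cases hs : s ≤ L <;> by_cases ht : t ≤ L
      · simp only [hs, ht, if_true]; exact e1 _ _ hst
      · simp only [hs, ht, if_true, if_false]
        push Not at ht
        have a1 := e1 s L hs
        have a2 := e2 0 (t - L) (by linarith)
        rw [h1] at a1; rw [h0'] at a2
        linarith [dist_triangle (γ s) y (η (t - L))]
      · linarith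
      · simp only [hs, ht, if_false]
        have := e2 (s - L) (t - L) (by linarith); linarith
    intro s t
    rcases le_total s t with hst | hst
    · rw [Real.dist_eq, abs_sub_comm, abs_of_nonneg (by linarith)]
      simpa using key s t hst
    · rw [dist_comm, Real.dist_eq, abs_of_nonneg (by linarith)]
      simpa using key t s hst
  have hGG : ∀ t, (if t ≤ L then γ t else η (t - L)) ∈ G := by
    intro t; split_ifs
    · exact hG _
    · exact hG' _
  refine ⟨L + L', fun t => if t ≤ L then γ t else η (t - L), by linarith, hlip, ?_, ?_, hGG, ?_⟩
  · simp [hL, h0]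
  · rcases hL'.eq_or_lt with h | h
    · subst h; simp [h1]; rw [← h1', h0']
    · simp [h, h1']
  · have hc := h.cont1 hlip.continuous hGG
    rw [← intervalIntegral.integral_add_adjacent_intervals (b := L) (hc.intervalIntegrable _ _)
      (hc.intervalIntegrable _ _)]
    congr 1
    · apply intervalIntegral.integral_congr
      intro t ht
      rw [uIcc_of_le hL] at ht
      simp [ht.2]
    · have := intervalIntegral.integral_comp_sub_right (fun t => 1 / δ (η t)) L (a := L) (b := L + L')
      simp only [sub_self, add_sub_cancel_left] at this
      rw [← this]
      apply intervalIntegral.integral_congr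
      intro t ht
      rw [uIcc_of_le (by linarith)] at ht
      rcases ht.1.eq_or_lt with h | h
      · subst h; simp [h1, h0']
      · simp [not_le.2 h]

theorem Crv.symm {n : ℕ} {G : Set (EE n)} {δ : EE n → ℝ}
    {x y : EE n} {v : ℝ} (h1 : Crv G δ x y v) : Crv G δ y x v := by
  obtain ⟨L, γ, hL, hl, h0, h1, hG, rfl⟩ := h1
  refine ⟨L, fun t => γ (L - t), hL, ?_, by simp [h1], by simp [h0], fun t => hG _, ?_⟩
  · have : LipschitzWith 1 (fun t : ℝ => L - t) := by
      refine LipschitzWith.of_dist_le_mul fun s t => ?_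
      rw [Real.dist_eq, Real.dist_eq, abs_sub_comm]; simp
    have := hl.comp this
    rw [one_mul] at this; exact this
  · have := intervalIntegral.integral_comp_sub_left (fun t => 1 / δ (γ t)) L (a := 0) (b := L)
    simpa using this.symm

theorem seg_crv {n : ℕ} {G : Set (EE n)} {δ : EE n → ℝ} {x y : EE n}
    (hs : segment ℝ x y ⊆ G) : ∃ v, Crv G δ x y v := by
  rcases eq_or_ne x y with rfl | hxy
  · refine ⟨_, 0, fun t => x, le_rfl, (LipschitzWith.const x).weaken zero_le_one, rfl, rfl,
      fun t => hs (left_mem_segment _ _ _), rfl⟩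
  have hp : 0 < ‖y - x‖ := norm_pos_iff.2 (sub_ne_zero.2 hxy.symm)
  refine ⟨_, clamp_crv (L := ‖y - x‖) (γ := fun t => x + (t * ‖y - x‖⁻¹) • (y - x)) hp.le
    ?_ (by simp) ?_ ?_ rfl⟩
  · refine LipschitzWith.of_dist_le_mul fun s t => ?_
    rw [dist_add_left, dist_eq_norm, ← sub_smul, norm_smul, ← sub_mul, norm_mul, Real.dist_eq]
    simp [hp.ne']
  · simp [hp.ne']
  · intro t ht
    apply hs
    rw [segment_eq_image']
    refine ⟨t * ‖y - x‖⁻¹, ⟨mul_nonneg ht.1 (inv_nonneg.2 hp.le), ?_⟩, rfl⟩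
    rw [mul_inv_le_iff₀ hp]; linarith [ht.2]

theorem exists_crv {n : ℕ} {G : Set (EE n)} {δ : EE n → ℝ} {D : ℝ} (h : DomF G δ D)
    (hGc : IsConnected G) {x y : EE n} (hx : x ∈ G) (hy : y ∈ G) : ∃ v, Crv G δ x y v := by
  refine hGc.isPreconnected.induction₂ (fun x y => ∃ v, Crv G δ x y v) ?_ ?_ ?_ hx hy
  · intro x hx
    apply mem_nhdsWithin_of_mem_nhds
    filter_upwards [Metric.ball_mem_nhds x (h.pos x hx)] with z hz
    exact seg_crv (((convex_ball x (δ x)).segment_subset (Metric.mem_ball_self (h.pos x hx)) hz).trans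
      (h.ball x hx))
  · rintro x y z _ _ _ ⟨v, hv⟩ ⟨w, hw⟩
    exact ⟨_, hv.concat h hw⟩
  · rintro x y _ _ ⟨v, hv⟩
    exact ⟨v, hv.symm⟩

theorem near_geod {n : ℕ} {G : Set (EE n)} {D : ℝ}
    (h : DomF G (fun x => Metric.infDist x (frontier G)) D)
    (hGc : IsConnected G) {x y : EE n} (hx : x ∈ G) (hy : y ∈ G) :
    ∃ (L : ℝ) (γ : ℝ → EE n), 0 ≤ L ∧ LipschitzWith 1 γ ∧ γ 0 = x ∧ γ L = y ∧
    (∀ t, γ t ∈ G) ∧ ∀ s ∈ Icc 0 L, ∫ t in s..L, 1 / Metric.infDist (γ t) (frontier G) ≤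
      qhDist G (γ s) y + 1 := by
  have hset : ∀ x : EE n, {v : ℝ | ∃ (L : ℝ) (γ : ℝ → EuclideanSpace ℝ (Fin n)), 0 ≤ L ∧
    LipschitzWith 1 γ ∧ γ 0 = x ∧ γ L = y ∧ (∀ t ∈ Set.Icc (0:ℝ) L, γ t ∈ G) ∧
    v = ∫ t in (0:ℝ)..L, 1 / Metric.infDist (γ t) (frontier G)} =
    {v | Crv G (fun x => Metric.infDist x (frontier G)) x y v} := by
    intro x
    ext v
    constructor
    · rintro ⟨L, γ, h1, h2, h3, h4, h5, h6⟩
      exact clamp_crv (δ := fun x => Metric.infDist x (frontier G)) h1 h2 h3 h4 h5 h6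
    · rintro ⟨L, γ, h1, h2, h3, h4, h5, h6⟩
      exact ⟨L, γ, h1, h2, h3, h4, fun t _ => h5 t, h6⟩
  have hq : ∀ x, qhDist G x y = sInf {v | Crv G (fun x => Metric.infDist x (frontier G)) x y v} := by
    intro x; rw [qhDist, hset]
  have hbdd : ∀ x, BddBelow {v | Crv G (fun x => Metric.infDist x (frontier G)) x y v} := by
    intro x
    refine ⟨0, ?_⟩
    rintro v ⟨L, γ, h1, h2, h3, h4, h5, rfl⟩
    apply intervalIntegral.integral_nonneg h1
    intro t _
    exact one_div_nonneg.2 Metric.infDist_nonneg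
  have hlt : ∀ z ∈ G, ∀ a, qhDist G z y < a →
      ∃ v, Crv G (fun x => Metric.infDist x (frontier G)) z y v ∧ v < a := by
    intro z hz a ha
    rw [hq] at ha
    obtain ⟨v, hv, hva⟩ := exists_lt_of_csInf_lt (exists_crv h hGc hz hy) ha
    exact ⟨v, hv, hva⟩
  obtain ⟨v, hv, hva⟩ := hlt x hx (qhDist G x y + 1) (by linarith)
  obtain ⟨L, γ, h1, h2, h3, h4, h5, rfl⟩ := hv
  refine ⟨L, γ, h1, h2, h3, h4, h5, ?_⟩
  intro s hs
  by_contra hcon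
  push Not at hcon
  obtain ⟨w, hw, hwa⟩ := hlt (γ s) (h5 s) ((∫ t in s..L, 1 / Metric.infDist (γ t) (frontier G)) - 1)
    (by linarith)
  have hsub : Crv G (fun x => Metric.infDist x (frontier G)) x (γ s)
    (∫ t in 0..s, 1 / Metric.infDist (γ t) (frontier G)) := ⟨s, γ, hs.1, h2, h3, rfl, h5, rfl⟩
  have hcc := hsub.concat h hw
  have hle := csInf_le (hbdd x) hcc
  rw [← hq] at hle
  have hc := h.cont1 h2.continuous h5
  have := intervalIntegral.integral_add_adjacent_intervals (b := s) (hc.intervalIntegrable (μ := volume) 0 s)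
      (hc.intervalIntegrable (μ := volume) s L)
  linarith

theorem lip_sub {n : ℕ} {γ : ℝ → EE n} (hγ : LipschitzWith 1 γ) {s t : ℝ} (hst : s ≤ t) :
    dist (γ s) (γ t) ≤ t - s := by
  have := hγ.dist_le_mul s t
  rw [Real.dist_eq, abs_sub_comm, abs_of_nonneg (by linarith)] at this
  simpa using this

theorem log_le_cost {n : ℕ} {G : Set (EE n)} {δ : EE n → ℝ} {D : ℝ} (h : DomF G δ D)
    {γ : ℝ → EE n} (hγ : LipschitzWith 1 γ) (hG : ∀ t, γ t ∈ G) {s t : ℝ} (hst : s ≤ t) :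
    Real.log ((δ (γ s) + (t - s)) / δ (γ s)) ≤ ∫ r in s..t, 1 / δ (γ r) := by
  have hp := h.pos _ (hG s)
  have e1 := intervalIntegral.integral_comp_add_right (fun r : ℝ => 1 / r) (δ (γ s) - s)
    (a := s) (b := t)
  rw [integral_one_div_of_pos (by linarith) (by linarith)] at e1
  have e2 : Real.log ((δ (γ s) + (t - s)) / δ (γ s)) = ∫ r in s..t, 1 / (r + (δ (γ s) - s)) := by
    rw [e1]; congr 2 <;> ring
  rw [e2]
  apply intervalIntegral.integral_mono_on hst
  · apply ContinuousOn.intervalIntegrable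
    rw [uIcc_of_le hst]
    apply ContinuousOn.div continuousOn_const (by fun_prop)
    intro r hr
    have := hr.1
    linarith
  · exact (h.cont1 hγ.continuous hG).intervalIntegrable _ _
  · intro r hr
    apply one_div_le_one_div_of_le (h.pos _ (hG r))
    have := h.lip (γ r) (γ s)
    have := lip_sub hγ hr.1
    rw [dist_comm] at this
    linarith

theorem decay {n : ℕ} {G : Set (EE n)} {δ : EE n → ℝ} {D : ℝ} (h : DomF G δ D)
    {γ : ℝ → EE n} (hγ : LipschitzWith 1 γ) (hG : ∀ t, γ t ∈ G) {L : ℝ}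
    {β K : ℝ} (hβ : 0 < β) (hK : 0 < K)
    (hd : ∀ s ∈ Icc 0 L, δ (γ s) ≤ K * Real.exp (- β * ∫ r in s..L, 1 / δ (γ r)))
    {s : ℝ} (hs : s ∈ Icc 0 L) :
    s ≤ K / β / (δ (γ L)) ^ β * (δ (γ s)) ^ β := by
  have hc := h.cont1 hγ.continuous hG
  set τ : ℝ → ℝ := fun s => ∫ r in s..L, 1 / δ (γ r) with hτ
  have hder : ∀ s, HasDerivAt τ (- (1 / δ (γ s))) s := by
    intro s
    exact intervalIntegral.integral_hasDerivAt_left (hc.intervalIntegrable _ _)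
      (hc.stronglyMeasurableAtFilter _ _) hc.continuousAt
  have hder2 : ∀ s, HasDerivAt (fun s => K / β * Real.exp (-β * τ s) - s)
      (K * Real.exp (-β * τ s) / δ (γ s) - 1) s := by
    intro s
    have := ((((hder s).const_mul (-β)).exp).const_mul (K / β)).sub (hasDerivAt_id s)
    refine HasDerivAt.congr_deriv this ?_
    have := (h.pos _ (hG s)).ne'
    have e : K / β * β = K := by field_simp
    rw [show K / β * (Real.exp (-β * τ s) * (-β * -(1 / δ (γ s)))) = (K / β * β) * Real.exp (-β * τ s) / δ (γ s) by ring, e]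
  have hmono : MonotoneOn (fun s => K / β * Real.exp (-β * τ s) - s) (Icc 0 L) := by
    apply monotoneOn_of_deriv_nonneg (convex_Icc 0 L)
    · exact fun x _ => (hder2 x).continuousAt.continuousWithinAt
    · exact fun x _ => (hder2 x).differentiableAt.differentiableWithinAt
    · intro x hx
      rw [(hder2 x).deriv]
      rw [sub_nonneg, le_div_iff₀ (h.pos _ (hG x)), one_mul]
      exact hd x (interior_subset hx)
  have h1 := hmono (left_mem_Icc.2 (hs.1.trans hs.2)) hs hs.1
  have h2 : 0 < K / β * Real.exp (-β * τ 0) := by positivity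
  have h3 : s ≤ K / β * Real.exp (-β * τ s) := by
    simp only at h1; linarith
  refine h3.trans ?_
  rw [div_mul_eq_mul_div (K / β), mul_div_assoc (K / β)]
  apply mul_le_mul_of_nonneg_left _ (by positivity)
  have hps := h.pos _ (hG s)
  have hpL := h.pos _ (hG L)
  rw [← Real.div_rpow hps.le hpL.le, Real.rpow_def_of_pos (by positivity)]
  apply Real.exp_le_exp.2
  have h4 := log_le_cost h hγ hG hs.2
  have h5 : Real.log (δ (γ L) / δ (γ s)) ≤ τ s := by
    refine le_trans (Real.log_le_log (by positivity) ?_) h4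
    gcongr
    have := h.lip (γ L) (γ s)
    have := lip_sub hγ hs.2
    rw [dist_comm] at this
    linarith
  rw [Real.log_div hpL.ne' hps.ne'] at h5
  rw [Real.log_div hps.ne' hpL.ne']
  nlinarith

theorem chain_lemma {g f : ℝ → ℝ} (hg : Continuous g) {L c K : ℝ}
    (hc : 0 < c)
    (hf : ∀ s ∈ Icc 0 L, ∀ t ∈ Icc 0 L, s ≤ t → ∫ r in s..t, g r ≤ c → |f s - f t| ≤ K) (m : ℕ) :
    ∀ s ∈ Icc 0 L, ∫ r in 0..s, g r ≤ (m + 1) * c → |f 0 - f s| ≤ (m + 1) * K := by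
  induction m with
  | zero =>
    intro s hs hi
    simpa using hf 0 (left_mem_Icc.2 (hs.1.trans hs.2)) s hs hs.1 (by simpa using hi)
  | succ m ih =>
    intro s hs hi
    have h0 : (0 : ℝ) ∈ Icc 0 L := left_mem_Icc.2 (hs.1.trans hs.2)
    have hK : 0 ≤ K := by
      have := hf 0 h0 0 h0 le_rfl (by simp [hc.le])
      simpa using this
    rcases le_or_gt (∫ r in 0..s, g r) ((m + 1) * c) with h | h
    · refine (ih s hs h).trans ?_
      push_cast; nlinarith
    · have hcont : Continuous (fun s => ∫ r in 0..s, g r) :=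
        intervalIntegral.continuous_primitive (fun a b => hg.intervalIntegrable a b) 0
      have hiv := intermediate_value_Icc hs.1 hcont.continuousOn
      obtain ⟨t, ht, hti⟩ := hiv (show (m + 1) * c ∈ _ from ⟨by simp; positivity, h.le⟩)
      simp only at hti
      have htL : t ∈ Icc 0 L := ⟨ht.1, ht.2.trans hs.2⟩
      have h1 := ih t htL hti.le
      have h2 := intervalIntegral.integral_add_adjacent_intervals (μ := volume) (b := t)
        (hg.intervalIntegrable 0 t) (hg.intervalIntegrable t s)
      have h3 := hf t htL s hs ht.2 (by push_cast at hi; nlinarith)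
      push_cast
      calc |f 0 - f s| ≤ |f 0 - f t| + |f t - f s| := abs_sub_le _ _ _
        _ ≤ _ := by nlinarith

theorem good_curves {n : ℕ} {G : Set (EE n)} {D : ℝ} {β : ℝ} (hβ : 0 < β)
    (h : DomF G (fun x => Metric.infDist x (frontier G)) D)
    (hGc : IsConnected G) {x₀ : EE n} (hx0 : x₀ ∈ G) {c : ℝ} (hq : QHBCWith G β x₀ c) :
    ∃ C : ℝ, 0 < C ∧ ∀ x ∈ G, ∃ (L : ℝ) (γ : ℝ → EE n), 0 ≤ L ∧ LipschitzWith 1 γ ∧ γ 0 = x ∧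
      γ L = x₀ ∧ (∀ t, γ t ∈ G) ∧
      ∫ t in 0..L, 1 / Metric.infDist (γ t) (frontier G) ≤
        (1 / β) * Real.log (1 / Metric.infDist x (frontier G)) + C ∧
      ∀ s ∈ Icc 0 L, s ≤ C * (Metric.infDist (γ s) (frontier G)) ^ β := by
  have hp0 := h.pos _ hx0
  set K := Real.exp (β * (c + 1)) with hK
  refine ⟨max (|c| + 1) (K / β / (Metric.infDist x₀ (frontier G)) ^ β),
    lt_max_of_lt_left (by positivity), ?_⟩
  intro x hx
  obtain ⟨L, γ, h1, h2, h3, h4, h5, h6⟩ := near_geod h hGc hx hx0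
  refine ⟨L, γ, h1, h2, h3, h4, h5, ?_, ?_⟩
  · have := h6 0 ⟨le_rfl, h1⟩
    rw [h3] at this
    have h8 := hq x hx
    have := le_max_left (|c| + 1) (K / β / (Metric.infDist x₀ (frontier G)) ^ β)
    have := le_abs_self c
    linarith
  · intro s hs
    have := decay h h2 h5 hβ (Real.exp_pos (β * (c + 1))) ?_ hs
    · rw [h4] at this
      refine this.trans ?_
      apply mul_le_mul_of_nonneg_right (le_max_right _ _)
      exact Real.rpow_nonneg Metric.infDist_nonneg _
    · intro s hs
      have h7 := h6 s hs
      have h8 := hq (γ s) (h5 s)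
      have hp := h.pos _ (h5 s)
      rw [← Real.exp_add, ← Real.log_le_iff_le_exp hp]
      rw [one_div (Metric.infDist (γ s) (frontier G)), Real.log_inv] at h8
      have h9 : (∫ (t : ℝ) in s..L, 1 / Metric.infDist (γ t) (frontier G)) - (c + 1) ≤
        1 / β * -Real.log (Metric.infDist (γ s) (frontier G)) := by linarith
      have := mul_le_mul_of_nonneg_left h9 hβ.le
      rw [← mul_assoc, mul_one_div_cancel hβ.ne', one_mul] at this
      linarith

noncomputable def om (n : ℕ) : ℝ≥0∞ := volume (Metric.ball (0 : EE n) 1)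

theorem om_ne_top (n : ℕ) : om n ≠ ⊤ := measure_ball_lt_top.ne
theorem om_ne_zero (n : ℕ) : om n ≠ 0 := (Metric.measure_ball_pos _ _ one_pos).ne'

theorem vball {n : ℕ} (x : EE n) {r : ℝ} (hr : 0 < r) :
    volume (Metric.ball x r) = ENNReal.ofReal r ^ n * om n := by
  rw [Measure.addHaar_ball_of_pos _ _ hr, om, ENNReal.ofReal_pow hr.le]
  simp

theorem pow_lemma {α : Type*} [MeasurableSpace α] (μ : Measure α) [SFinite μ] (f : α → ℝ)
    (hf : Measurable f) (s : ℕ) : ∀ h : ℝ, μ {y | f y ≤ h} ^ (s + 1) ≤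
      2 ^ s * ∫⁻ y in {y | f y ≤ h}, μ {v | f v ≤ f y} ^ s ∂μ := by
  have hset : ∀ h, MeasurableSet {y | f y ≤ h} := fun h => measurableSet_le hf measurable_const
  have hF : Measurable (fun y => μ {v | f v ≤ f y}) := by
    have : Monotone (fun h : ℝ => μ {v | f v ≤ h}) := by
      intro a b hab
      exact measure_mono fun v (hv : f v ≤ a) => hv.trans hab
    exact this.measurable.comp hf
  induction s with
  | zero => intro h; simp
  | succ s ih =>
    intro h
    set A := {y | f y ≤ h} with hA
    set F : α → ℝ≥0∞ := fun y => μ {v | f v ≤ f y} with hFdef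
    have hm : Measurable (fun p : α × α => indicator {p : α × α | f p.1 ≤ f p.2} (fun p => F p.1 ^ s) p) := by
      apply Measurable.indicator
      · exact (hF.comp measurable_fst).pow_const s
      · exact measurableSet_le (hf.comp measurable_fst) (hf.comp measurable_snd)
    calc μ A ^ (s + 1 + 1) = μ A ^ (s + 1) * μ A := pow_succ _ _
      _ ≤ (2 ^ s * ∫⁻ y in A, F y ^ s ∂μ) * μ A := by gcongr; exact ih h
      _ = 2 ^ s * ∫⁻ y in A, ∫⁻ v in A, F y ^ s ∂μ ∂μ := by
          rw [mul_assoc, ← lintegral_mul_const _ (hF.pow_const s)]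
          simp
      _ ≤ 2 ^ s * ∫⁻ y in A, (F y ^ (s + 1) + ∫⁻ v in A, indicator {p : α × α | f p.1 ≤ f p.2} (fun p => F p.1 ^ s) (y, v) ∂μ) ∂μ := by
          gcongr with y
          have e : F y ^ (s+1) = ∫⁻ v, indicator {v | f v ≤ f y} (fun _ => F y ^ s) v ∂μ := by
            rw [lintegral_indicator (hset _)]
            simp [hFdef, pow_succ]
          have e2 : ∫⁻ v in A, indicator {v | f v ≤ f y} (fun _ => F y ^ s) v ∂μ ≤ F y ^ (s+1) := by
            rw [e]; exact setLIntegral_le_lintegral _ _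
          refine le_trans ?_ (add_le_add_left e2 _)
          rw [← lintegral_add_left (by exact (measurable_const.indicator (hset _)))]
          apply lintegral_mono
          intro v
          simp only [indicator, mem_ofPred_eq]
          rcases le_total (f v) (f y) with h1 | h1 <;> simp [h1]
      _ = 2 ^ s * (∫⁻ y in A, F y ^ (s + 1) ∂μ + ∫⁻ v in A, ∫⁻ y in A, indicator {p : α × α | f p.1 ≤ f p.2} (fun p => F p.1 ^ s) (y, v) ∂μ ∂μ) := by
          rw [lintegral_add_left (hF.pow_const _)]
          congr 2
          rw [lintegral_lintegral_swap]
          exact hm.aemeasurable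
      _ ≤ 2 ^ s * (∫⁻ y in A, F y ^ (s + 1) ∂μ + ∫⁻ v in A, F v ^ (s+1) ∂μ) := by
          gcongr with v
          calc ∫⁻ y in A, indicator {p : α × α | f p.1 ≤ f p.2} (fun p => F p.1 ^ s) (y, v) ∂μ
              ≤ ∫⁻ y, indicator {p : α × α | f p.1 ≤ f p.2} (fun p => F p.1 ^ s) (y, v) ∂μ :=
                setLIntegral_le_lintegral _ _
            _ ≤ ∫⁻ y, indicator {y | f y ≤ f v} (fun _ => F v ^ s) y ∂μ := by
                apply lintegral_mono
                intro y
                simp only [indicator, mem_ofPred_eq]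
                split_ifs with h1
                · gcongr
                  exact measure_mono fun w (hw : f w ≤ f y) => hw.trans h1
                · exact le_rfl
            _ = F v ^ (s+1) := by
                rw [lintegral_indicator (hset _)]
                simp [hFdef, pow_succ]
      _ = 2 ^ (s + 1) * ∫⁻ y in A, F y ^ (s + 1) ∂μ := by
          rw [← two_mul, pow_succ, mul_assoc]

noncomputable def ww {n : ℕ} (δ : EE n → ℝ) (y : EE n) : ℝ≥0∞ := (ENNReal.ofReal (δ y) ^ n)⁻¹

noncomputable def MM {n : ℕ} (G : Set (EE n)) (δ : EE n → ℝ) (lam h : ℝ) (x : EE n) : ℝ≥0∞ :=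
  ∫⁻ y, indicator {p : ℝ × EE n × EE n | p.2.2 ∈ G ∧ δ p.2.2 ≤ p.1 ∧ dist p.2.1 p.2.2 < lam * δ p.2.2}
    (fun p => ww δ p.2.2) (h, x, y)

theorem DomF.ww_meas {n : ℕ} {G : Set (EE n)} {δ : EE n → ℝ} {D : ℝ} (h : DomF G δ D) :
    Measurable (ww δ) := by
  have := h.cont.measurable
  unfold ww
  fun_prop

theorem DomF.KK_meas {n : ℕ} {G : Set (EE n)} {δ : EE n → ℝ} {D : ℝ} (h : DomF G δ D) (lam : ℝ) :
    Measurable (indicator {p : ℝ × EE n × EE n | p.2.2 ∈ G ∧ δ p.2.2 ≤ p.1 ∧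
      dist p.2.1 p.2.2 < lam * δ p.2.2} (fun p => ww δ p.2.2)) := by
  have hδ := h.cont.measurable
  have hw := h.ww_meas
  apply Measurable.indicator
  · fun_prop
  · refine MeasurableSet.inter ?_ (MeasurableSet.inter ?_ ?_)
    · exact h.isOpen.measurableSet.preimage (by fun_prop : Measurable fun p : ℝ × EE n × EE n => p.2.2)
    · exact measurableSet_le (f := fun p : ℝ × EE n × EE n => δ p.2.2) (g := fun p => p.1)
        (by fun_prop) (by fun_prop)
    · exact measurableSet_lt (f := fun p : ℝ × EE n × EE n => dist p.2.1 p.2.2)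
        (g := fun p => lam * δ p.2.2) (by fun_prop) (by fun_prop)

theorem DomF.MM_meas {n : ℕ} {G : Set (EE n)} {δ : EE n → ℝ} {D : ℝ} (h : DomF G δ D) (lam : ℝ) :
    Measurable (fun p : ℝ × EE n => MM G δ lam p.1 p.2) := by
  unfold MM
  apply Measurable.lintegral_prod_right' (f := fun q : (ℝ × EE n) × EE n =>
    indicator {p : ℝ × EE n × EE n | p.2.2 ∈ G ∧ δ p.2.2 ≤ p.1 ∧
      dist p.2.1 p.2.2 < lam * δ p.2.2} (fun p => ww δ p.2.2) (q.1.1, q.1.2, q.2))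
  exact (h.KK_meas lam).comp (by fun_prop)

theorem MM_pow {n : ℕ} {G : Set (EE n)} {δ : EE n → ℝ} {D : ℝ} (h : DomF G δ D) (lam : ℝ) (s : ℕ)
    (t : ℝ) (x : EE n) :
    MM G δ lam t x ^ (s + 1) ≤ 2 ^ s * ∫⁻ y, indicator {p : ℝ × EE n × EE n | p.2.2 ∈ G ∧ δ p.2.2 ≤ p.1 ∧
      dist p.2.1 p.2.2 < lam * δ p.2.2} (fun p => ww δ p.2.2) (t, x, y) * MM G δ lam (δ y) x ^ s := by
  have hδ := h.cont.measurable
  have hw := h.ww_meas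
  have hS : MeasurableSet {y | y ∈ G ∧ dist x y < lam * δ y} :=
    h.isOpen.measurableSet.inter (measurableSet_lt (f := fun y => dist x y)
      (g := fun y => lam * δ y) (by fun_prop) (by fun_prop))
  have hset : ∀ h, MeasurableSet {y | δ y ≤ h} := fun h => measurableSet_le hδ measurable_const
  set μ := (volume.restrict {y | y ∈ G ∧ dist x y < lam * δ y}).withDensity (ww δ) with hμ
  have e1 : ∀ t, μ {y | δ y ≤ t} = MM G δ lam t x := by
    intro t
    rw [hμ, withDensity_apply _ (hset t), Measure.restrict_restrict (hset t),
      ← lintegral_indicator ((hset t).inter hS), MM]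
    congr 1
    ext y
    simp only [indicator, mem_inter_iff, mem_ofPred_eq]
    congr 1
    apply propext; exact ⟨fun h => ⟨h.2.1, h.1, h.2.2⟩, fun h => ⟨h.2.1, h.1, h.2.2⟩⟩
  have := pow_lemma μ δ hδ s t
  simp only [e1] at this
  refine this.trans (le_of_eq ?_)
  congr 1
  have hm : Measurable (fun y => MM G δ lam (δ y) x ^ s) :=
    ((h.MM_meas lam).comp (by fun_prop : Measurable fun y => (δ y, x))).pow_const s
  rw [hμ, restrict_withDensity (hset t), lintegral_withDensity_eq_lintegral_mul _ hw hm,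
    Measure.restrict_restrict (hset t), ← lintegral_indicator ((hset t).inter hS)]
  congr 1
  ext y
  simp only [indicator, mem_inter_iff, mem_ofPred_eq, Pi.mul_apply, ite_mul, zero_mul]
  congr 1
  apply propext; exact ⟨fun h => ⟨h.2.1, h.1, h.2.2⟩, fun h => ⟨h.2.1, h.1, h.2.2⟩⟩

theorem MM_moment {n : ℕ} {G : Set (EE n)} {δ : EE n → ℝ} {D : ℝ} (h : DomF G δ D) {lam : ℝ}
    (hlam : 1 ≤ lam) (s : ℕ) : ∃ C : ℝ≥0∞, C ≠ ⊤ ∧ ∀ (z : EE n) (R t : ℝ), 0 < R → t ≤ R →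
      ∫⁻ x in Metric.ball z R, MM G δ lam t x ^ s ≤ C * ENNReal.ofReal R ^ n := by
  have hlam0 : 0 < lam := by linarith
  have hδ := h.cont.measurable
  have hw := h.ww_meas
  induction s with
  | zero =>
    refine ⟨om n, om_ne_top n, fun z R t hR _ => ?_⟩
    simp only [pow_zero, lintegral_one, Measure.restrict_apply_univ, vball z hR]
    rw [mul_comm]
  | succ s ih =>
    obtain ⟨C, hC, ih⟩ := ih
    refine ⟨2 ^ s * (C * ENNReal.ofReal lam ^ n * (ENNReal.ofReal (1 + lam) ^ n * om n)), ?_, ?_⟩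
    · have := om_ne_top n
      finiteness
    intro z R t hR htR
    set K := indicator {p : ℝ × EE n × EE n | p.2.2 ∈ G ∧ δ p.2.2 ≤ p.1 ∧
      dist p.2.1 p.2.2 < lam * δ p.2.2} (fun p => ww δ p.2.2) with hK
    have hKm : Measurable K := h.KK_meas lam
    have hMm := h.MM_meas lam
    have hjm : Measurable (fun p : EE n × EE n => K (t, p.1, p.2) * MM G δ lam (δ p.2) p.1 ^ s) := by
      apply Measurable.mul
      · exact hKm.comp (by fun_prop)
      · exact (hMm.comp (by fun_prop : Measurable fun p : EE n × EE n => (δ p.2, p.1))).pow_const s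
    calc ∫⁻ x in Metric.ball z R, MM G δ lam t x ^ (s + 1)
        ≤ ∫⁻ x in Metric.ball z R, 2 ^ s * ∫⁻ y, K (t, x, y) * MM G δ lam (δ y) x ^ s := by
          apply lintegral_mono
          intro x
          exact MM_pow h lam s t x
      _ = 2 ^ s * ∫⁻ x in Metric.ball z R, ∫⁻ y, K (t, x, y) * MM G δ lam (δ y) x ^ s :=
          lintegral_const_mul' _ _ (by finiteness)
      _ = 2 ^ s * ∫⁻ y, ∫⁻ x in Metric.ball z R, K (t, x, y) * MM G δ lam (δ y) x ^ s := by
          rw [lintegral_lintegral_swap]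
          exact hjm.aemeasurable
      _ ≤ 2 ^ s * ∫⁻ y, indicator (Metric.ball z ((1 + lam) * R))
            (fun _ => C * ENNReal.ofReal lam ^ n) y := by
          gcongr with y
          by_cases hy : y ∈ G ∧ δ y ≤ t
          · have hp := h.pos y hy.1
            by_cases hyz : y ∈ Metric.ball z ((1 + lam) * R)
            · rw [indicator_of_mem hyz]
              calc ∫⁻ x in Metric.ball z R, K (t, x, y) * MM G δ lam (δ y) x ^ s
                  ≤ ∫⁻ x, K (t, x, y) * MM G δ lam (δ y) x ^ s := setLIntegral_le_lintegral _ _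
                _ ≤ ∫⁻ x, indicator (Metric.ball y (lam * δ y)) (fun x => ww δ y * MM G δ lam (δ y) x ^ s) x := by
                    apply lintegral_mono
                    intro x
                    simp only [hK, indicator, mem_ofPred_eq, Metric.mem_ball, hy, true_and]
                    split_ifs <;> simp
                _ = ww δ y * ∫⁻ x in Metric.ball y (lam * δ y), MM G δ lam (δ y) x ^ s := by
                    rw [lintegral_indicator measurableSet_ball, lintegral_const_mul]
                    exact (hMm.comp (by fun_prop : Measurable fun x => (δ y, x))).pow_const s
                _ ≤ ww δ y * (C * ENNReal.ofReal (lam * δ y) ^ n) := by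
                    gcongr
                    exact ih y (lam * δ y) (δ y) (by positivity) (by nlinarith)
                _ = C * ENNReal.ofReal lam ^ n := by
                    rw [ENNReal.ofReal_mul hlam0.le, mul_pow, ww]
                    rw [show ∀ a b c d : ℝ≥0∞, a * (b * (c * d)) = b * c * (a * d) by intros; ring]
                    rw [ENNReal.inv_mul_cancel, mul_one]
                    · simp [hp]
                    · finiteness
            · rw [indicator_of_notMem hyz, nonpos_iff_eq_zero]
              rw [setLIntegral_congr_fun (g := fun _ => 0) measurableSet_ball, lintegral_zero]
              intro x hx
              simp only
              rw [hK, indicator_of_notMem, zero_mul]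
              rintro ⟨_, _, h3⟩
              apply hyz
              simp only at h3
              rw [Metric.mem_ball] at *
              have := dist_triangle y x z
              rw [dist_comm y x] at this
              nlinarith
          · refine le_trans (le_of_eq ?_) zero_le
            rw [setLIntegral_congr_fun (g := fun _ => 0) measurableSet_ball, lintegral_zero]
            intro x hx
            simp only
            rw [hK, indicator_of_notMem, zero_mul]
            rintro ⟨h1, h2, _⟩
            exact hy ⟨h1, h2⟩
      _ = _ := by
          rw [lintegral_indicator measurableSet_ball, lintegral_const, Measure.restrict_apply_univ,
            vball z (by positivity), ENNReal.ofReal_mul (by positivity), mul_pow]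
          ring

noncomputable def psi {n : ℕ} (G : Set (EE n)) (δ : EE n → ℝ) (lam : ℝ) (x : EE n) (h : ℝ) : ℝ≥0∞ :=
  ∫⁻ y in Metric.ball x h ∩ {y | y ∈ G ∧ dist x y < lam * δ y}, ww δ y

theorem psi_le {n : ℕ} {G : Set (EE n)} {δ : EE n → ℝ} {D : ℝ} (h : DomF G δ D)
    (lam : ℝ) (x : EE n) (t : ℝ) : psi G δ lam x t ≤ MM G δ lam D x := by
  have hδ := h.cont.measurable
  have hS : MeasurableSet {y | y ∈ G ∧ dist x y < lam * δ y} :=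
    h.isOpen.measurableSet.inter (measurableSet_lt (f := fun y => dist x y)
      (g := fun y => lam * δ y) (by fun_prop) (by fun_prop))
  rw [psi, MM, ← lintegral_indicator (measurableSet_ball.inter hS)]
  apply lintegral_mono
  intro y
  by_cases hy : y ∈ Metric.ball x t ∩ {y | y ∈ G ∧ dist x y < lam * δ y}
  · rw [indicator_of_mem hy]
    beta_reduce; rw [indicator_of_mem]
    exact ⟨hy.2.1, h.le y hy.2.1, hy.2.2⟩
  · rw [indicator_of_notMem hy]; exact zero_le

theorem psi_step {n : ℕ} {G : Set (EE n)} {δ : EE n → ℝ} {D : ℝ} (h : DomF G δ D)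
    {Λ : ℝ} (hΛ : 1 ≤ Λ) {x p : EE n} (hp : p ∈ G) {t : ℝ} (ht0 : 0 < t) (ht : δ x ≤ t)
    (h1 : 3 * t / 4 ≤ dist x p) (h2 : dist x p ≤ 5 * t / 4) (h3 : t / (4 * Λ) ≤ δ p) :
    psi G δ (16 * Λ) x (t / 2) + ENNReal.ofReal (1 / (24 * Λ)) ^ n * om n ≤
      psi G δ (16 * Λ) x (4 * t) := by
  have hδ := h.cont.measurable
  have hΛ0 : 0 < Λ := by linarith
  have hr : t / (8 * Λ) ≤ t / 8 := by
    apply div_le_div_of_nonneg_left ht0.le (by norm_num); linarith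
  have hr2 : t / (4 * Λ) = 2 * (t / (8 * Λ)) := by field_simp; norm_num
  have hr0 : 0 < t / (8 * Λ) := by positivity
  have hB : ∀ y ∈ Metric.ball p (t / (8 * Λ)), y ∈ G ∧ dist x y < 16 * Λ * δ y ∧ δ y ≤ 3 * t ∧
      5 * t / 8 < dist x y ∧ dist x y < 4 * t := by
    intro y hy
    have hy' := hy
    rw [Metric.mem_ball] at hy
    have a1 := h.lip p y
    have a2 := h.lip y x
    have a3 := dist_triangle x p y
    have a4 := dist_triangle x y p
    rw [dist_comm p y] at a1 a3
    rw [dist_comm y x] at a2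
    have a5 : t / (8 * Λ) ≤ δ y := by linarith
    have a6 : 2 * t ≤ 16 * Λ * δ y := by
      rw [div_le_iff₀ (by positivity)] at a5; linarith
    refine ⟨h.ball p hp (Metric.ball_subset_ball (by linarith) hy'), ?_, ?_, ?_, ?_⟩ <;> linarith
  have key : ENNReal.ofReal (1 / (24 * Λ)) ^ n * om n ≤ ∫⁻ y in Metric.ball p (t / (8 * Λ)), ww δ y := by
    calc ENNReal.ofReal (1 / (24 * Λ)) ^ n * om n
        = ∫⁻ y in Metric.ball p (t / (8 * Λ)), (ENNReal.ofReal (3 * t) ^ n)⁻¹ := by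
          rw [lintegral_const, Measure.restrict_apply_univ, vball p hr0, ← mul_assoc]
          congr 1
          rw [ENNReal.inv_pow, ← mul_pow, ← ENNReal.ofReal_inv_of_pos (by positivity),
            ← ENNReal.ofReal_mul (by positivity)]
          congr 2
          field_simp; norm_num
      _ ≤ _ := by
          apply setLIntegral_mono' measurableSet_ball
          intro y hy
          rw [ww]
          gcongr
          exact (hB y hy).2.2.1
  refine (add_le_add_right key _).trans ?_
  rw [psi, psi, ← lintegral_union measurableSet_ball]
  · apply lintegral_mono_set
    rintro y (hy | hy)
    · exact ⟨Metric.ball_subset_ball (by linarith) hy.1, hy.2⟩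
    · obtain ⟨b1, b2, b3, b4, b5⟩ := hB y hy
      exact ⟨by rw [Metric.mem_ball, dist_comm]; exact b5, b1, b2⟩
  · apply Set.disjoint_left.2
    rintro y hy hy'
    obtain ⟨b1, b2, b3, b4, b5⟩ := hB y hy'
    have := hy.1
    rw [Metric.mem_ball, dist_comm] at this
    linarith

theorem psi_count {n : ℕ} {G : Set (EE n)} {δ : EE n → ℝ} {D : ℝ} (h : DomF G δ D)
    {Λ : ℝ} (hΛ : 1 ≤ Λ) {x : EE n} (hx : x ∈ G) {γ : ℝ → EE n} (hγ : LipschitzWith 1 γ)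
    (hG : ∀ t, γ t ∈ G) (h0 : γ 0 = x) {c : ℝ≥0∞} (hc : 1 ≤ c * (ENNReal.ofReal (1 / (24 * Λ)) ^ n * om n))
    (J : ℕ) : ∀ r, 0 ≤ r → 8 ^ J * δ x ≤ dist x (γ r) →
      (J : ℝ≥0∞) ≤ c * psi G δ (16 * Λ) x (8 ^ J * δ x / 2) +
        ENNReal.ofReal ((∫ s in 0..r, 1 / δ (γ s)) / Λ) := by
  have hΛ0 : 0 < Λ := by linarith
  have hd := h.pos x hx
  have hcc := h.cont1 hγ.continuous hG
  have hpos : ∀ s, 0 ≤ 1 / δ (γ s) := fun s => one_div_nonneg.2 (h.pos _ (hG s)).le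
  induction J with
  | zero => intro r _ _; simp
  | succ J ih =>
    intro r hr0 hr
    set t := 8 ^ J * δ x with ht
    have ht0 : 0 < t := by positivity
    have htx : δ x ≤ t := by
      have : (1 : ℝ) ≤ 8 ^ J := one_le_pow₀ (by norm_num)
      nlinarith
    have e8 : (8 : ℝ) ^ (J + 1) * δ x = 8 * t := by rw [ht]; ring
    rw [e8] at hr ⊢
    have hcont : Continuous (fun s => dist x (γ s)) := continuous_const.dist hγ.continuous
    obtain ⟨r', hr', hr'e⟩ := intermediate_value_Icc hr0 hcont.continuousOn
      (show t ∈ Icc (dist x (γ 0)) (dist x (γ r)) from ⟨by rw [h0, dist_self]; exact ht0.le, by linarith⟩)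
    simp only at hr'e
    have hr2 : r' + t / 4 ≤ r := by
      have a1 := lip_sub hγ hr'.2
      have a2 := dist_triangle x (γ r') (γ r)
      linarith
    have hdist : ∀ s ∈ Icc r' (r' + t / 4), 3 * t / 4 ≤ dist x (γ s) ∧ dist x (γ s) ≤ 5 * t / 4 := by
      intro s hs
      have a1 := lip_sub hγ hs.1
      have a2 := dist_triangle x (γ r') (γ s)
      have a3 := dist_triangle x (γ s) (γ r')
      rw [dist_comm (γ s) (γ r')] at a3
      have := hs.2
      constructor <;> linarith
    have i1 := ih r' hr'.1 hr'e.ge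
    have c1 := intervalIntegral.integral_add_adjacent_intervals (μ := volume) (b := r')
        (hcc.intervalIntegrable 0 r') (hcc.intervalIntegrable r' (r' + t / 4))
    have c2 := intervalIntegral.integral_add_adjacent_intervals (μ := volume) (b := r' + t / 4)
        (hcc.intervalIntegrable 0 (r' + t / 4)) (hcc.intervalIntegrable (r' + t / 4) r)
    have c3 : 0 ≤ ∫ s in (r' + t/4)..r, 1 / δ (γ s) :=
      intervalIntegral.integral_nonneg hr2 fun s _ => hpos s
    have c4 : 0 ≤ ∫ s in r'..(r' + t/4), 1 / δ (γ s) :=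
      intervalIntegral.integral_nonneg (by linarith) fun s _ => hpos s
    have c5 : 0 ≤ ∫ s in 0..r', 1 / δ (γ s) :=
      intervalIntegral.integral_nonneg hr'.1 fun s _ => hpos s
    by_cases hgood : ∃ s ∈ Icc r' (r' + t / 4), t / (4 * Λ) ≤ δ (γ s)
    · obtain ⟨s, hs, hsδ⟩ := hgood
      have := psi_step h hΛ (hG s) ht0 htx (hdist s hs).1 (hdist s hs).2 hsδ
      calc ((J + 1 : ℕ) : ℝ≥0∞) = J + 1 := by push_cast; rfl
        _ ≤ (c * psi G δ (16 * Λ) x (t / 2) +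
        ENNReal.ofReal ((∫ s in 0..r', 1 / δ (γ s)) / Λ)) + c * (ENNReal.ofReal (1 / (24 * Λ)) ^ n * om n) :=
          add_le_add i1 hc
        _ = c * (psi G δ (16 * Λ) x (t / 2) + ENNReal.ofReal (1 / (24 * Λ)) ^ n * om n) +
           ENNReal.ofReal ((∫ s in 0..r', 1 / δ (γ s)) / Λ) := by ring
        _ ≤ _ := by
          rw [show 8 * t / 2 = 4 * t by ring]
          gcongr
          linarith
    · push Not at hgood
      have c6 : Λ ≤ ∫ s in r'..(r' + t/4), 1 / δ (γ s) := by
        have : ∫ s in r'..(r' + t/4), (4 * Λ / t) ≤ ∫ s in r'..(r' + t/4), 1 / δ (γ s) := by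
          apply intervalIntegral.integral_mono_on (by linarith) (by simp) (hcc.intervalIntegrable _ _)
          intro s hs
          have := hgood s hs
          rw [show 4 * Λ / t = 1 / (t / (4 * Λ)) by field_simp]
          exact one_div_le_one_div_of_le (h.pos _ (hG s)) this.le
        rw [intervalIntegral.integral_const, smul_eq_mul] at this
        have e : (r' + t / 4 - r') * (4 * Λ / t) = Λ := by field_simp; ring
        linarith
      calc ((J + 1 : ℕ) : ℝ≥0∞) = J + ENNReal.ofReal 1 := by simp
        _ ≤ (c * psi G δ (16 * Λ) x (t / 2) +
        ENNReal.ofReal ((∫ s in 0..r', 1 / δ (γ s)) / Λ)) + ENNReal.ofReal 1 :=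
          add_le_add i1 le_rfl
        _ = c * psi G δ (16 * Λ) x (t / 2) + ENNReal.ofReal ((∫ s in 0..r', 1 / δ (γ s)) / Λ + 1) := by
          rw [add_assoc, ENNReal.ofReal_add (by positivity) zero_le_one]
        _ ≤ _ := by
          gcongr
          · apply lintegral_mono_set
            exact inter_subset_inter_left _ (Metric.ball_subset_ball (by linarith))
          · rw [div_add_one hΛ0.ne']
            gcongr
            linarith

theorem log_le_MM {n : ℕ} {G : Set (EE n)} {δ : EE n → ℝ} {D : ℝ} (h : DomF G δ D)
    {β C : ℝ} (hβ : 0 < β) (hC : 0 < C) {x₀ : EE n} (hx0 : x₀ ∈ G)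
    (hcur : ∀ x ∈ G, ∃ (L : ℝ) (γ : ℝ → EE n), 0 ≤ L ∧ LipschitzWith 1 γ ∧ γ 0 = x ∧
      γ L = x₀ ∧ (∀ t, γ t ∈ G) ∧ ∫ t in 0..L, 1 / δ (γ t) ≤ (1 / β) * Real.log (1 / δ x) + C) :
    ∃ (A : ℝ≥0∞) (lam : ℝ), A ≠ ⊤ ∧ 1 ≤ lam ∧ ∀ x ∈ G,
      ENNReal.ofReal (Real.log (1 / δ x)) ≤ A + A * MM G δ lam D x := by
  have hl8 : 0 < Real.log 8 := Real.log_pos (by norm_num)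
  obtain ⟨Λ, hΛ, hΛβ⟩ : ∃ Λ : ℝ, 1 ≤ Λ ∧ 2 * Real.log 8 / β ≤ Λ := ⟨_, le_max_left _ _, le_max_right _ _⟩
  have hΛ0 : 0 < Λ := by linarith
  set c0 := ENNReal.ofReal (1 / (24 * Λ)) ^ n * om n with hc0
  have hc00 : c0 ≠ 0 := mul_ne_zero (pow_ne_zero _ (by simp; positivity)) (om_ne_zero n)
  have hc0t : c0 ≠ ⊤ := ENNReal.mul_ne_top (by finiteness) (om_ne_top n)
  have ha0 := h.pos _ hx0
  set a := δ x₀ with ha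
  set B := 2 * Real.log 8 * (Real.log (2 / a) / Real.log 8 + 1 + C / Λ) with hB
  refine ⟨c0⁻¹ + ENNReal.ofReal (2 * Real.log 8) * c0⁻¹ + ENNReal.ofReal B + ENNReal.ofReal (Real.log (2 / a)),
    16 * Λ, ?_, by linarith, ?_⟩
  · have : c0⁻¹ ≠ ⊤ := ENNReal.inv_ne_top.2 hc00
    finiteness
  intro x hx
  have hd := h.pos x hx
  set M := MM G δ (16 * Λ) D x
  set A := c0⁻¹ + ENNReal.ofReal (2 * Real.log 8) * c0⁻¹ + ENNReal.ofReal B + ENNReal.ofReal (Real.log (2 / a)) with hA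
  rcases le_or_gt (a / 2) (δ x) with hcase | hcase
  · calc ENNReal.ofReal (Real.log (1 / δ x)) ≤ ENNReal.ofReal (Real.log (2 / a)) := by
          apply ENNReal.ofReal_le_ofReal
          apply Real.log_le_log (by positivity)
          rw [div_le_div_iff₀ hd ha0]; linarith
      _ ≤ A := by rw [hA]; exact le_add_self
      _ ≤ _ := le_self_add
  set l := Real.log (1 / δ x) with hl
  rcases le_or_gt l 0 with hl0 | hl0
  · rw [ENNReal.ofReal_of_nonpos hl0]; exact zero_le
  obtain ⟨L, γ, hL, hγ, h0, hγL, hG, hcost⟩ := hcur x hx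
  set J := ⌊Real.log ((a / 2) / δ x) / Real.log 8⌋₊ with hJ
  have hlog0 : 0 ≤ Real.log ((a / 2) / δ x) := Real.log_nonneg (by rw [le_div_iff₀ hd]; linarith)
  have hJ1 : (J : ℝ) ≤ Real.log ((a / 2) / δ x) / Real.log 8 := Nat.floor_le (by positivity)
  have hJ2 : Real.log ((a / 2) / δ x) / Real.log 8 < J + 1 := Nat.lt_floor_add_one _
  have hJ3 : (8 : ℝ) ^ J * δ x ≤ a / 2 := by
    rw [← le_div_iff₀ hd, ← Real.log_le_log_iff (by positivity) (by positivity), Real.log_pow]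
    rwa [← le_div_iff₀ hl8]
  have hdx : a / 2 ≤ dist x (γ L) := by
    have := h.lip x₀ x
    rw [hγL, dist_comm]
    linarith
  have hcount := psi_count h hΛ hx hγ hG h0 (c := c0⁻¹) (by rw [ENNReal.inv_mul_cancel hc00 hc0t]) J L hL
    (hJ3.trans hdx)
  have hcount2 : (J : ℝ≥0∞) ≤ c0⁻¹ * M + ENNReal.ofReal ((1 / β * l + C) / Λ) := by
    refine hcount.trans ?_
    gcongr
    exact psi_le h _ _ _
  have hlogeq : Real.log ((a / 2) / δ x) = l - Real.log (2 / a) := by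
    rw [hl, ← Real.log_div (by positivity) (by positivity)]
    congr 1; field_simp
  by_cases hX : c0⁻¹ * M = ⊤
  · have : A * M = ⊤ := by
      rw [eq_top_iff, ← hX]
      gcongr
      rw [hA, add_assoc, add_assoc]; exact le_self_add
    rw [this]; simp
  have hXr : c0⁻¹ * M = ENNReal.ofReal (c0⁻¹ * M).toReal := (ENNReal.ofReal_toReal hX).symm
  set X := (c0⁻¹ * M).toReal with hXd
  have hX0 : 0 ≤ X := ENNReal.toReal_nonneg
  have hJr : (J : ℝ) ≤ X + (1 / β * l + C) / Λ := by
    rw [hXr, ← ENNReal.ofReal_add hX0 (by positivity), ← ENNReal.ofReal_natCast] at hcount2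
    exact (ENNReal.ofReal_le_ofReal_iff (by positivity)).1 hcount2
  have hreal : l ≤ 2 * Real.log 8 * X + B := by
    have e1 : 1 / β * l / Λ ≤ l / (2 * Real.log 8) := by
      rw [show 1/β*l/Λ = l/(β*Λ) by field_simp]
      apply div_le_div_of_nonneg_left hl0.le (by positivity)
      rw [div_le_iff₀ hβ] at hΛβ; linarith
    rw [hlogeq] at hJ2
    have e2 : l / Real.log 8 = 2 * (l / (2 * Real.log 8)) := by field_simp
    rw [sub_div, e2] at hJ2
    rw [add_div] at hJr
    have e3 : l / (2 * Real.log 8) ≤ X + (Real.log (2 / a) / Real.log 8 + 1 + C / Λ) := by linarith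
    rw [div_le_iff₀ (by positivity)] at e3
    rw [hB]; linarith
  calc ENNReal.ofReal l ≤ ENNReal.ofReal (2 * Real.log 8 * X + B) := ENNReal.ofReal_le_ofReal hreal
    _ ≤ ENNReal.ofReal (2 * Real.log 8 * X) + ENNReal.ofReal B := ENNReal.ofReal_add_le
    _ = ENNReal.ofReal (2 * Real.log 8) * c0⁻¹ * M + ENNReal.ofReal B := by
        rw [ENNReal.ofReal_mul (by positivity), ← hXr, mul_assoc]
    _ ≤ A * M + A := by
        gcongr
        · rw [hA, add_assoc, add_assoc, add_left_comm]; exact le_self_add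
        · rw [hA, add_right_comm]; exact le_add_self
    _ = _ := add_comm _ _

theorem fub {n : ℕ} (H : EE n × EE n → ℝ≥0∞) (hH : Measurable H) :
    ∫⁻ x, ∫⁻ w, ∫⁻ t in Icc (0:ℝ) 1, H (x + t • w, w) = ∫⁻ z, ∫⁻ w, H (z, w) := by
  have hm : Measurable (Function.uncurry fun x w => ∫⁻ t in Icc (0:ℝ) 1, H (x + t • w, w)) := by
    unfold Function.uncurry
    apply Measurable.lintegral_prod_right' (f := fun q : (EE n × EE n) × ℝ =>
      H (q.1.1 + q.2 • q.1.2, q.1.2))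
    fun_prop
  rw [lintegral_lintegral_swap hm.aemeasurable,
    lintegral_lintegral_swap (f := fun z w => H (z, w)) hH.aemeasurable]
  congr 1
  ext w
  rw [lintegral_lintegral_swap (f := fun x (t : ℝ) => H (x + t • w, w))]
  · have : ∀ t : ℝ, ∫⁻ x, H (x + t • w, w) = ∫⁻ x, H (x, w) := fun t =>
      lintegral_add_right_eq_self (fun x => H (x, w)) (t • w)
    simp [this]
  · apply Measurable.aemeasurable
    unfold Function.uncurry
    fun_prop

/-- Jensen for averages. -/
theorem avg_sq {n : ℕ} {B : Set (EE n)} (hB0 : volume B ≠ 0) (hBt : volume B ≠ ⊤)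
    {u : EE n → ℝ} (hu : Measurable u) (hi : IntegrableOn u B) (a : ℝ) :
    ‖a - ⨍ y in B, u y‖ₑ ^ 2 * volume B ≤ ∫⁻ y in B, ‖a - u y‖ₑ ^ 2 := by
  have h1 : a - ⨍ y in B, u y = ⨍ y in B, (a - u y) := by
    rw [setAverage_eq, setAverage_eq, integral_sub _ hi, setIntegral_const, smul_sub, smul_smul,
      inv_mul_cancel₀, one_smul]
    · rw [measureReal_def]; exact (ENNReal.toReal_pos hB0 hBt).ne'
    · exact integrableOn_const hBt
  have h2 : ‖a - ⨍ y in B, u y‖ₑ * volume B ≤ ∫⁻ y in B, ‖a - u y‖ₑ := by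
    rw [h1, setAverage_eq, enorm_smul, mul_right_comm]
    have : ‖(volume.real B)⁻¹‖ₑ * volume B = 1 := by
      rw [enorm_inv, measureReal_def, Real.enorm_eq_ofReal ENNReal.toReal_nonneg, ENNReal.ofReal_toReal hBt]
      · exact ENNReal.inv_mul_cancel hB0 hBt
      · exact (ENNReal.toReal_pos hB0 hBt).ne'
    rw [this, one_mul]
    exact enorm_integral_le_lintegral_enorm _
  have h3 : (∫⁻ y in B, ‖a - u y‖ₑ) ^ 2 ≤ (∫⁻ y in B, ‖a - u y‖ₑ ^ 2) * volume B := by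
    have := ENNReal.lintegral_mul_le_Lp_mul_Lq (volume.restrict B) Real.HolderConjugate.two_two
      (f := fun y => ‖a - u y‖ₑ) (g := fun _ => 1) (by fun_prop) (by fun_prop)
    simp only [Pi.mul_apply, mul_one, ENNReal.one_rpow, lintegral_one, Measure.restrict_apply_univ] at this
    calc _ ≤ _ := pow_le_pow_left' this 2
      _ = _ := by
        rw [mul_pow, ← ENNReal.rpow_natCast, ← ENNReal.rpow_natCast, ← ENNReal.rpow_mul, ← ENNReal.rpow_mul]
        simp
  have h4 : (‖a - ⨍ y in B, u y‖ₑ * volume B) ^ 2 ≤ (∫⁻ y in B, ‖a - u y‖ₑ ^ 2) * volume B :=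
    (pow_le_pow_left' h2 2).trans h3
  rw [mul_pow, sq (volume B), ← mul_assoc] at h4
  exact (ENNReal.mul_le_mul_iff_left hB0 hBt).1 h4

theorem avg_avg_sq {n : ℕ} {B B' : Set (EE n)} (hB0 : volume B ≠ 0) (hBt : volume B ≠ ⊤)
    (hB0' : volume B' ≠ 0) (hBt' : volume B' ≠ ⊤)
    {u : EE n → ℝ} (hu : Measurable u) (hi : IntegrableOn u B) (hi' : IntegrableOn u B') :
    ‖(⨍ y in B, u y) - ⨍ y in B', u y‖ₑ ^ 2 * volume B * volume B' ≤
      ∫⁻ x in B, ∫⁻ y in B', ‖u x - u y‖ₑ ^ 2 := by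
  calc ‖(⨍ y in B, u y) - ⨍ y in B', u y‖ₑ ^ 2 * volume B * volume B'
      ≤ (∫⁻ x in B, ‖u x - ⨍ y in B', u y‖ₑ ^ 2) * volume B' := by
        gcongr
        have := avg_sq hB0 hBt hu hi (⨍ y in B', u y)
        rw [← enorm_neg, neg_sub]
        refine this.trans (le_of_eq (lintegral_congr fun y => ?_))
        rw [← enorm_neg, neg_sub]
    _ = ∫⁻ x in B, ‖u x - ⨍ y in B', u y‖ₑ ^ 2 * volume B' := by
        rw [lintegral_mul_const _ (by fun_prop)]
    _ ≤ _ := lintegral_mono fun x => avg_sq hB0' hBt' hu hi' (u x)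

def Seg {n : ℕ} (G : Set (EE n)) (u : EE n → ℝ) (g : EE n → ℝ≥0∞) : Prop :=
  ∀ x w, (∀ t ∈ Icc (0:ℝ) 1, x + t • w ∈ G) →
    ‖u x - u (x + w)‖ₑ ^ 2 ≤ ‖w‖ₑ ^ 2 * ∫⁻ t in Icc (0:ℝ) 1, g (x + t • w)

theorem ball_poinc {n : ℕ} {G : Set (EE n)} {u : EE n → ℝ} {g : EE n → ℝ≥0∞} (hs : Seg G u g)
    (hg : Measurable g) {z : EE n} {r : ℝ} (hr : 0 < r) (hB : Metric.ball z r ⊆ G) :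
    ∫⁻ x in Metric.ball z r, ∫⁻ y in Metric.ball z r, ‖u x - u y‖ₑ ^ 2 ≤
      ENNReal.ofReal (2 * r) ^ 2 * (ENNReal.ofReal (2 * r) ^ n * om n) * ∫⁻ y in Metric.ball z r, g y := by
  set B := Metric.ball z r with hBdef
  have hBm : MeasurableSet B := measurableSet_ball
  set H : EE n × EE n → ℝ≥0∞ := fun p => (B.indicator g p.1) *
    ((Metric.ball (0 : EE n) (2 * r)).indicator (fun _ => ENNReal.ofReal (2 * r) ^ 2) p.2) with hH
  have hHm : Measurable H := by
    have h1 : Measurable (B.indicator g) := hg.indicator hBm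
    have h2 : Measurable ((Metric.ball (0 : EE n) (2 * r)).indicator (fun _ : EE n => ENNReal.ofReal (2 * r) ^ 2)) :=
      measurable_const.indicator measurableSet_ball
    fun_prop
  calc ∫⁻ x in B, ∫⁻ y in B, ‖u x - u y‖ₑ ^ 2
     ≤ ∫⁻ x, ∫⁻ w, ∫⁻ t in Icc (0:ℝ) 1, H (x + t • w, w) := by
        rw [← lintegral_indicator hBm]
        apply lintegral_mono
        intro x
        by_cases hx : x ∈ B
        swap
        · rw [indicator_of_notMem hx]; exact zero_le
        rw [indicator_of_mem hx, ← lintegral_indicator hBm, ← lintegral_add_left_eq_self _ x]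
        apply lintegral_mono
        intro w
        beta_reduce
        by_cases hw : x + w ∈ B
        swap
        · rw [indicator_of_notMem hw]; exact zero_le
        rw [indicator_of_mem hw]
        have hseg : ∀ t ∈ Icc (0:ℝ) 1, x + t • w ∈ B := by
          intro t ht
          have := (convex_ball z r).add_smul_sub_mem hx hw ht
          rwa [add_sub_cancel_left] at this
        have hw2 : w ∈ Metric.ball (0 : EE n) (2 * r) := by
          rw [mem_ball_zero_iff]
          have := dist_triangle_right (x + w) x z
          rw [hBdef, Metric.mem_ball] at hx hw
          simp only [dist_self_add_left] at this
          linarith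
        refine (hs x w fun t ht => hB (hseg t ht)).trans ?_
        rw [← lintegral_const_mul _ (by fun_prop)]
        apply setLIntegral_mono' measurableSet_Icc
        intro t ht
        simp only [hH]
        rw [indicator_of_mem (hseg t ht), indicator_of_mem hw2, mul_comm]
        gcongr
        rw [mem_ball_zero_iff] at hw2
        rw [← ofReal_norm]
        exact ENNReal.ofReal_le_ofReal hw2.le
    _ = ∫⁻ z, ∫⁻ w, H (z, w) := fub H hHm
    _ = _ := by
        simp only [hH]
        have : ∀ z, ∫⁻ w, B.indicator g z *
          ((Metric.ball (0 : EE n) (2 * r)).indicator (fun _ => ENNReal.ofReal (2 * r) ^ 2) w) =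
            B.indicator g z * (ENNReal.ofReal (2 * r) ^ 2 * (ENNReal.ofReal (2 * r) ^ n * om n)) := by
          intro z
          rw [lintegral_const_mul _ (measurable_const.indicator measurableSet_ball),
            lintegral_indicator measurableSet_ball, lintegral_const, Measure.restrict_apply_univ,
            vball _ (by positivity)]
        simp_rw [this]
        rw [lintegral_mul_const _ (hg.indicator hBm), lintegral_indicator hBm, mul_comm]

noncomputable def ZZ {n : ℕ} (δ : EE n → ℝ) (u : EE n → ℝ) (x : EE n) : ℝ≥0∞ :=
  (volume (Metric.ball x (δ x / 4)))⁻¹ * ∫⁻ y in Metric.ball x (δ x / 4), ‖u x - u y‖ₑ ^ 2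

theorem ZZ_int {n : ℕ} {G : Set (EE n)} {δ : EE n → ℝ} {D : ℝ} (h : DomF G δ D)
    {u : EE n → ℝ} {g : EE n → ℝ≥0∞} (hs : Seg G u g)
    (hg : Measurable g) (hu : Measurable u) :
    ∫⁻ x in G, ZZ δ u x ≤ ENNReal.ofReal D ^ 2 * (ENNReal.ofReal (5 / 2) ^ n) * ∫⁻ y in G, g y := by
  have hD := h.one
  have hδ := h.cont.measurable
  have hGm := h.isOpen.measurableSet
  set H : EE n × EE n → ℝ≥0∞ := fun p => (G.indicator g p.1) * (ENNReal.ofReal D ^ 2 *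
    (ENNReal.ofReal (δ p.1 / 5) ^ n * om n)⁻¹) *
    ({p : EE n × EE n | p.2 ∈ Metric.ball (0 : EE n) (δ p.1 / 2)}.indicator (fun _ => 1) p) with hH
  have hHm : Measurable H := by
    have h1 : Measurable (G.indicator g) := hg.indicator hGm
    have h2 : Measurable ({p : EE n × EE n | p.2 ∈ Metric.ball (0 : EE n) (δ p.1 / 2)}.indicator
        (fun _ => (1 : ℝ≥0∞))) := by
      apply measurable_const.indicator
      simp only [mem_ball_zero_iff]
      exact measurableSet_lt (by fun_prop) (by fun_prop)
    fun_prop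
  calc ∫⁻ x in G, ZZ δ u x
     ≤ ∫⁻ x, ∫⁻ w, ∫⁻ t in Icc (0:ℝ) 1, H (x + t • w, w) := by
        rw [← lintegral_indicator hGm]
        apply lintegral_mono
        intro x
        by_cases hx : x ∈ G
        swap
        · rw [indicator_of_notMem hx]; exact zero_le
        have hd := h.pos x hx
        rw [indicator_of_mem hx, ZZ, ← lintegral_const_mul _ (by fun_prop), ← lintegral_indicator measurableSet_ball, ← lintegral_add_left_eq_self _ x]
        apply lintegral_mono
        intro w
        beta_reduce
        by_cases hw : x + w ∈ Metric.ball x (δ x / 4)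
        swap
        · rw [indicator_of_notMem hw]; exact zero_le
        rw [indicator_of_mem hw]
        have hw2 : ‖w‖ < δ x / 4 := by
          rw [Metric.mem_ball] at hw
          simpa only [dist_self_add_left] using hw
        have hdist : ∀ t ∈ Icc (0:ℝ) 1, dist (x + t • w) x ≤ ‖w‖ := by
          intro t ht
          rw [dist_self_add_left, norm_smul, Real.norm_of_nonneg ht.1]
          exact mul_le_of_le_one_left (norm_nonneg _) ht.2
        have hseg : ∀ t ∈ Icc (0:ℝ) 1, x + t • w ∈ G := by
          intro t ht
          apply h.ball x hx
          rw [Metric.mem_ball]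
          have := hdist t ht
          linarith
        refine (mul_le_mul_right (hs x w fun t ht => (hseg t ht)) _).trans ?_
        rw [← mul_assoc, ← lintegral_const_mul _ (by fun_prop)]
        apply setLIntegral_mono' measurableSet_Icc
        intro t ht
        have a0 := hdist t ht
        have a1 := h.lip x (x + t • w)
        have a2 := h.lip (x + t • w) x
        have a3 := h.le x hx
        rw [dist_comm] at a1
        simp only [hH]
        rw [indicator_of_mem (hseg t ht), indicator_of_mem, mul_one, mul_comm, vball _ (by positivity)]
        · rw [mul_comm (_)⁻¹]
          have b1 : ‖w‖ₑ ≤ ENNReal.ofReal D := by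
            rw [← ofReal_norm]
            exact ENNReal.ofReal_le_ofReal (by linarith)
          have b2 : ENNReal.ofReal (δ (x + t • w) / 5) ≤ ENNReal.ofReal (δ x / 4) :=
            ENNReal.ofReal_le_ofReal (by linarith)
          gcongr
        · rw [mem_ofPred_eq, mem_ball_zero_iff]
          simp only; linarith
    _ = ∫⁻ z, ∫⁻ w, H (z, w) := fub H hHm
    _ ≤ ∫⁻ z, G.indicator g z * (ENNReal.ofReal D ^ 2 * ENNReal.ofReal (5 / 2) ^ n) := by
        apply lintegral_mono
        intro z
        simp only [hH]
        by_cases hz : z ∈ G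
        swap
        · simp [indicator_of_notMem hz]
        have hd := h.pos z hz
        have e : ∀ w, {p : EE n × EE n | p.2 ∈ Metric.ball (0 : EE n) (δ p.1 / 2)}.indicator (fun _ => (1 : ℝ≥0∞)) (z, w)
          = (Metric.ball (0 : EE n) (δ z / 2)).indicator (fun _ => 1) w := by
          intro w; simp [indicator]
        simp_rw [e]
        rw [lintegral_const_mul _ (measurable_const.indicator measurableSet_ball),
            lintegral_indicator measurableSet_ball, lintegral_one, Measure.restrict_apply_univ,
            vball _ (by positivity), mul_assoc, mul_assoc]
        gcongr
        rw [ENNReal.mul_inv (by right; exact om_ne_top n) (by right; exact om_ne_zero n), mul_mul_mul_comm,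
          ENNReal.inv_mul_cancel (om_ne_zero n) (om_ne_top n), mul_one,
          ENNReal.inv_pow, ← mul_pow, ← ENNReal.ofReal_inv_of_pos (by positivity),
            ← ENNReal.ofReal_mul (by positivity)]
        gcongr
        apply le_of_eq
        field_simp
    _ = _ := by
        rw [lintegral_mul_const _ (hg.indicator hGm), lintegral_indicator hGm, mul_comm]

noncomputable def mm {n : ℕ} (δ : EE n → ℝ) (u : EE n → ℝ) (z : EE n) : ℝ :=
  ⨍ y in Metric.ball z (δ z / 4), u y

theorem mm_ZZ {n : ℕ} {G : Set (EE n)} {δ : EE n → ℝ} {D : ℝ} (h : DomF G δ D)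
    {u : EE n → ℝ} (hu : Measurable u) (hi : IntegrableOn u G) {x : EE n} (hx : x ∈ G) :
    ‖u x - mm δ u x‖ₑ ^ 2 ≤ ZZ δ u x := by
  have hd := h.pos x hx
  have h0 : volume (Metric.ball x (δ x / 4)) ≠ 0 := (Metric.measure_ball_pos _ _ (by positivity)).ne'
  have ht : volume (Metric.ball x (δ x / 4)) ≠ ⊤ := measure_ball_lt_top.ne
  have := avg_sq h0 ht hu (hi.mono_set ((Metric.ball_subset_ball (by linarith)).trans (h.ball x hx))) (u x)
  rw [ZZ, mul_comm, ← div_eq_mul_inv, ENNReal.le_div_iff_mul_le (by simp [h0]) (by simp [ht])]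
  exact this

theorem chain_step {n : ℕ} {G : Set (EE n)} {δ : EE n → ℝ} {D : ℝ} (h : DomF G δ D)
    {u : EE n → ℝ} {g : EE n → ℝ≥0∞} (hs : Seg G u g)
    (hg : Measurable g) (hu : Measurable u) (hi : IntegrableOn u G) {z z' : EE n} (hz : z ∈ G)
    (hz' : z' ∈ G) (hzz : dist z z' ≤ δ z / 8) :
    ‖mm δ u z - mm δ u z'‖ₑ ^ 2 ≤ (32 ^ n * (om n)⁻¹) * (ENNReal.ofReal (δ z) ^ 2 * (ENNReal.ofReal (δ z) ^ n)⁻¹ *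
      ∫⁻ y in Metric.ball z (δ z / 2), g y) := by
  have hd := h.pos z hz
  have hd' := h.pos z' hz'
  have a1 := h.lip z z'
  have a2 := h.lip z' z
  rw [dist_comm] at a2
  have hsub : Metric.ball z (δ z / 4) ⊆ Metric.ball z (δ z / 2) := Metric.ball_subset_ball (by linarith)
  have hsub' : Metric.ball z' (δ z' / 4) ⊆ Metric.ball z (δ z / 2) := by
    apply Metric.ball_subset_ball'
    rw [dist_comm]; linarith
  have hsG : Metric.ball z (δ z / 2) ⊆ G := (Metric.ball_subset_ball (by linarith)).trans (h.ball z hz)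
  have b1 := avg_avg_sq (Metric.measure_ball_pos volume z (show 0 < δ z / 4 by positivity)).ne' measure_ball_lt_top.ne
    (Metric.measure_ball_pos volume z' (show 0 < δ z' / 4 by positivity)).ne' measure_ball_lt_top.ne hu
    (hi.mono_set (hsub.trans hsG)) (hi.mono_set (hsub'.trans hsG))
  have b2 := ball_poinc hs hg (show 0 < δ z / 2 by positivity) hsG
  have b3 : ∫⁻ x in Metric.ball z (δ z / 4), ∫⁻ y in Metric.ball z' (δ z' / 4), ‖u x - u y‖ₑ ^ 2 ≤
     ∫⁻ x in Metric.ball z (δ z / 2), ∫⁻ y in Metric.ball z (δ z / 2), ‖u x - u y‖ₑ ^ 2 :=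
    (lintegral_mono fun x => lintegral_mono_set hsub').trans (lintegral_mono_set hsub)
  have b4 := (b1.trans b3).trans b2
  rw [← mm, ← mm, vball _ (by positivity), vball _ (by positivity), mul_div_cancel₀ _ two_ne_zero] at b4
  set X := ‖mm δ u z - mm δ u z'‖ₑ ^ 2
  set d := ENNReal.ofReal (δ z) with hdd
  have c1 : ENNReal.ofReal (δ z / 4) = 4⁻¹ * d := by
    rw [div_eq_inv_mul, ENNReal.ofReal_mul (by norm_num), ENNReal.ofReal_inv_of_pos (by norm_num)]; simp [hdd]
  have c2 : 8⁻¹ * d ≤ ENNReal.ofReal (δ z' / 4) := by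
    calc 8⁻¹ * d = ENNReal.ofReal (δ z / 8) := by
          rw [div_eq_inv_mul, ENNReal.ofReal_mul (by norm_num), ENNReal.ofReal_inv_of_pos (by norm_num)]; simp [hdd]
      _ ≤ _ := ENNReal.ofReal_le_ofReal (by linarith)
  set I := ∫⁻ y in Metric.ball z (δ z / 2), g y
  set W := d ^ n * om n with hW
  have hd0 : d ≠ 0 := by simp [hdd, hd]
  have hdt : d ≠ ⊤ := by simp [hdd]
  have hW0 : W ≠ 0 := mul_ne_zero (pow_ne_zero _ hd0) (om_ne_zero n)
  have hWt : W ≠ ⊤ := ENNReal.mul_ne_top (by finiteness) (om_ne_top n)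
  have b5 : (X * (4⁻¹ ^ n * 8⁻¹ ^ n)) * W * W ≤ d ^ 2 * I * W := by
    calc _ = X * ((4⁻¹ * d) ^ n * om n) * ((8⁻¹ * d) ^ n * om n) := by rw [mul_pow, mul_pow, hW]; ring
      _ ≤ X * (ENNReal.ofReal (δ z / 4) ^ n * om n) * (ENNReal.ofReal (δ z' / 4) ^ n * om n) := by
        rw [c1]; gcongr
      _ ≤ _ := b4
      _ = _ := by ring
  rw [ENNReal.mul_le_mul_iff_left hW0 hWt] at b5
  have b6 : (32 : ℝ≥0∞) ^ n * (4⁻¹ ^ n * 8⁻¹ ^ n) = 1 := by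
    rw [← mul_pow, ← mul_pow, ← ENNReal.mul_inv (by simp) (by simp),
      show (4 * 8 : ℝ≥0∞) = 32 by norm_num, ENNReal.mul_inv_cancel (by simp) (by simp), one_pow]
  calc X = (32 ^ n * (4⁻¹ ^ n * 8⁻¹ ^ n)) * X * (W * W⁻¹) := by
        rw [b6, ENNReal.mul_inv_cancel hW0 hWt]; simp
    _ = 32 ^ n * W⁻¹ * ((X * (4⁻¹ ^ n * 8⁻¹ ^ n)) * W) := by ring
    _ ≤ 32 ^ n * W⁻¹ * (d ^ 2 * I) := by gcongr
    _ = _ := by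
      rw [hW, ENNReal.mul_inv (by right; exact om_ne_top n) (by right; exact om_ne_zero n)]
      ring

theorem real_pow_aux {n : ℕ} (hn : 2 ≤ n) {a b D β : ℝ} (ha : 0 < a) (hb : 0 < b) (hba : b ≤ 2 * a) (haD : a ≤ D)
    (hD : 1 ≤ D) (hβ0 : 0 < β) (hβ1 : 1 - 2 / (n:ℝ) ≤ β) (hβ2 : β ≤ 1) :
    a ^ 2 * (a ^ n)⁻¹ ≤ 2 ^ n * D ^ 2 * ((b ^ β) ^ n)⁻¹ := by
  have hn0 : (0 : ℝ) < n := by positivity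
  have e1 : (b ^ β) ^ n ≤ 2 ^ n * (a ^ β) ^ n := by
    rw [← mul_pow]
    gcongr
    calc b ^ β ≤ (2 * a) ^ β := by gcongr
      _ = 2 ^ β * a ^ β := Real.mul_rpow (by norm_num) ha.le
      _ ≤ 2 ^ (1:ℝ) * a ^ β := by gcongr; norm_num
      _ = _ := by simp
  have hx : 0 ≤ β * n + 2 - n := by
    have : (1 - 2 / (n:ℝ)) * n ≤ β * n := by gcongr
    rw [sub_mul, div_mul_cancel₀ _ hn0.ne'] at this; linarith
  have e2 : a ^ 2 * (a ^ β) ^ n ≤ a ^ n * D ^ 2 := by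
    calc a ^ 2 * (a ^ β) ^ n = a ^ n * a ^ (β * n + 2 - n) := by
          rw [← Real.rpow_natCast, ← Real.rpow_natCast, ← Real.rpow_natCast, ← Real.rpow_mul ha.le, ← Real.rpow_add ha, ← Real.rpow_add ha]
          congr 1; push_cast; ring
      _ ≤ a ^ n * D ^ (β * n + 2 - n) := by gcongr
      _ ≤ a ^ n * D ^ (2:ℝ) := by
          gcongr
          · nlinarith
      _ = _ := by norm_num
  have p1 : 0 < (b ^ β) ^ n := by positivity
  rw [← div_eq_mul_inv, ← div_eq_mul_inv, div_le_div_iff₀ (by positivity) p1]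
  calc a ^ 2 * (b ^ β) ^ n ≤ a ^ 2 * (2 ^ n * (a ^ β) ^ n) := by gcongr
    _ = 2 ^ n * (a ^ 2 * (a ^ β) ^ n) := by ring
    _ ≤ 2 ^ n * (a ^ n * D ^ 2) := by gcongr
    _ = _ := by ring

noncomputable def YK {n : ℕ} (G : Set (EE n)) (δ : EE n → ℝ) (β C : ℝ) (g : EE n → ℝ≥0∞) : EE n × EE n → ℝ≥0∞ :=
  indicator {p : EE n × EE n | p.2 ∈ G ∧ dist p.1 p.2 < C * δ p.2 ^ β}
    (fun p => (ENNReal.ofReal (δ p.2 ^ β) ^ n)⁻¹ * g p.2)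

noncomputable def YY {n : ℕ} (G : Set (EE n)) (δ : EE n → ℝ) (β C : ℝ) (g : EE n → ℝ≥0∞) (x : EE n) : ℝ≥0∞ :=
  ∫⁻ y, YK G δ β C g (x, y)

theorem YK_meas {n : ℕ} {G : Set (EE n)} {δ : EE n → ℝ} {D : ℝ} (h : DomF G δ D) (β C : ℝ)
    {g : EE n → ℝ≥0∞} (hg : Measurable g) : Measurable (YK G δ β C g) := by
  have hδ := h.cont.measurable
  apply Measurable.indicator
  · fun_prop
  · refine MeasurableSet.inter ?_ ?_
    · exact h.isOpen.measurableSet.preimage (by fun_prop : Measurable fun p : EE n × EE n => p.2)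
    · exact measurableSet_lt (f := fun p : EE n × EE n => dist p.1 p.2) (by fun_prop) (by fun_prop)

theorem YY_meas {n : ℕ} {G : Set (EE n)} {δ : EE n → ℝ} {D : ℝ} (h : DomF G δ D) (β C : ℝ)
    {g : EE n → ℝ≥0∞} (hg : Measurable g) : Measurable (YY G δ β C g) :=
  (YK_meas h β C hg).lintegral_prod_right'

theorem YY_int {n : ℕ} {G : Set (EE n)} {δ : EE n → ℝ} {D : ℝ} (h : DomF G δ D) (β : ℝ) {C : ℝ} (hC : 0 < C)
    {g : EE n → ℝ≥0∞} (hg : Measurable g) :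
    ∫⁻ x, YY G δ β C g x ≤ ENNReal.ofReal C ^ n * om n * ∫⁻ y in G, g y := by
  have hGm := h.isOpen.measurableSet
  unfold YY
  rw [lintegral_lintegral_swap (f := fun x y => YK G δ β C g (x, y)) (YK_meas h β C hg).aemeasurable,
    ← lintegral_indicator hGm, ← lintegral_const_mul _ (hg.indicator hGm)]
  apply lintegral_mono
  intro y
  beta_reduce
  by_cases hy : y ∈ G
  swap
  · simp [YK, hy]
  have hd : 0 < δ y ^ β := Real.rpow_pos_of_pos (h.pos y hy) _
  have e : ∀ x, YK G δ β C g (x, y) = (Metric.ball y (C * δ y ^ β)).indicator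
      (fun _ => (ENNReal.ofReal (δ y ^ β) ^ n)⁻¹ * g y) x := by
    intro x; simp [YK, hy, indicator]
  simp_rw [e]
  rw [lintegral_indicator measurableSet_ball, lintegral_const, Measure.restrict_apply_univ,
    vball _ (by positivity), indicator_of_mem hy, ENNReal.ofReal_mul hC.le, mul_pow]
  set b := ENNReal.ofReal (δ y ^ β) ^ n
  have hb0 : b ≠ 0 := pow_ne_zero _ (by simp [hd])
  have hbt : b ≠ ⊤ := by finiteness
  apply le_of_eq
  calc _ = (b⁻¹ * b) * (ENNReal.ofReal C ^ n * om n * g y) := by ring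
    _ = _ := by rw [ENNReal.inv_mul_cancel hb0 hbt, one_mul]

theorem YK_val {n : ℕ} {G : Set (EE n)} {δ : EE n → ℝ} {β C : ℝ} {g : EE n → ℝ≥0∞} {x y : EE n}
    (hy : y ∈ G) (hxy : dist x y < C * δ y ^ β) :
    YK G δ β C g (x, y) = (ENNReal.ofReal (δ y ^ β) ^ n)⁻¹ * g y := by
  simp [YK, indicator, hy, hxy]

theorem chain_int_Y {n : ℕ} (hn : 2 ≤ n) {G : Set (EE n)} {δ : EE n → ℝ} {D : ℝ} (h : DomF G δ D)
    {β C : ℝ} (hβ0 : 0 < β) (hβ1 : 1 - 2 / (n:ℝ) ≤ β) (hβ2 : β ≤ 1) (hC : 0 < C)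
    {g : EE n → ℝ≥0∞} (hg : Measurable g) {x z : EE n} (hz : z ∈ G)
    (hx : dist x z ≤ C * δ z ^ β) :
    ENNReal.ofReal (δ z) ^ 2 * (ENNReal.ofReal (δ z) ^ n)⁻¹ *
      ∫⁻ y in Metric.ball z (δ z / 2), g y ≤ ENNReal.ofReal (2 ^ n * D ^ 2) *
      YY G δ β (2 * (C + D)) g x := by
  have hD := h.one
  have hd := h.pos z hz
  have hδ := h.cont.measurable
  rw [← lintegral_const_mul _ hg, ← lintegral_indicator measurableSet_ball, YY,
    ← lintegral_const_mul (f := fun y => YK G δ β (2 * (C + D)) g (x, y)) _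
      ((YK_meas h β _ hg).comp (by fun_prop : Measurable fun y => (x, y)))]
  apply lintegral_mono
  intro y
  beta_reduce
  by_cases hy : y ∈ Metric.ball z (δ z / 2)
  swap
  · rw [indicator_of_notMem hy]; exact zero_le
  have hyG : y ∈ G := h.ball z hz (Metric.ball_subset_ball (by linarith) hy)
  rw [Metric.mem_ball] at hy
  have hdy := h.pos y hyG
  have a1 := h.lip z y
  have a2 := h.lip y z
  rw [dist_comm] at a1
  have a3 := dist_triangle x z y
  rw [dist_comm z y] at a3
  have a4 : δ z ≤ D * δ z ^ β := by
    calc δ z = δ z ^ (1 - β) * δ z ^ β := by rw [← Real.rpow_add hd]; simp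
      _ ≤ D ^ (1 - β) * δ z ^ β := by gcongr; exact h.le z hz
      _ ≤ D ^ (1:ℝ) * δ z ^ β := by gcongr; linarith
      _ = _ := by simp
  have a5 : δ z ^ β ≤ 2 * δ y ^ β := by
    calc δ z ^ β ≤ (2 * δ y) ^ β := by gcongr; linarith
      _ = 2 ^ β * δ y ^ β := Real.mul_rpow (by norm_num) hdy.le
      _ ≤ 2 ^ (1:ℝ) * δ y ^ β := by gcongr; norm_num
      _ = _ := by simp
  have hxy : dist x y < 2 * (C + D) * δ y ^ β := by
    have : (C + D) * δ z ^ β ≤ (C + D) * (2 * δ y ^ β) := by gcongr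
    nlinarith
  rw [indicator_of_mem (by exact hy), YK_val hyG hxy, ← mul_assoc]
  refine mul_le_mul_left ?_ _
  rw [← ENNReal.ofReal_pow hd.le, ← ENNReal.ofReal_pow hd.le, ← ENNReal.ofReal_pow (by positivity),
    ← ENNReal.ofReal_inv_of_pos (by positivity), ← ENNReal.ofReal_inv_of_pos (by positivity),
    ← ENNReal.ofReal_mul (by positivity), ← ENNReal.ofReal_mul (by positivity)]
  apply ENNReal.ofReal_le_ofReal
  exact real_pow_aux hn hd hdy (by linarith) (h.le z hz) hD hβ0 hβ1 hβ2

theorem chain_step_Y {n : ℕ} (hn : 2 ≤ n) {G : Set (EE n)} {δ : EE n → ℝ} {D : ℝ} (h : DomF G δ D)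
    {β C : ℝ} (hβ0 : 0 < β) (hβ1 : 1 - 2 / (n:ℝ) ≤ β) (hβ2 : β ≤ 1) (hC : 0 < C)
    {u : EE n → ℝ} {g : EE n → ℝ≥0∞} (hs : Seg G u g)
    (hg : Measurable g) (hu : Measurable u) (hi : IntegrableOn u G) {x z z' : EE n} (hz : z ∈ G)
    (hz' : z' ∈ G) (hzz : dist z z' ≤ δ z / 8) (hx : dist x z ≤ C * δ z ^ β) :
    ‖mm δ u z - mm δ u z'‖ₑ ^ 2 ≤ (32 ^ n * (om n)⁻¹ * ENNReal.ofReal (2 ^ n * D ^ 2)) *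
      YY G δ β (2 * (C + D)) g x := by
  refine (chain_step h hs hg hu hi hz hz' hzz).trans ?_
  rw [mul_assoc (32 ^ n * _)]
  exact mul_le_mul_right (chain_int_Y hn h hβ0 hβ1 hβ2 hC hg hz hx) _

theorem chain_bound {n : ℕ} (hn : 2 ≤ n) {G : Set (EE n)} {δ : EE n → ℝ} {D : ℝ} (h : DomF G δ D)
    {β C : ℝ} (hβ0 : 0 < β) (hβ1 : 1 - 2 / (n:ℝ) ≤ β) (hβ2 : β ≤ 1) (hC : 0 < C)
    {u : EE n → ℝ} {g : EE n → ℝ≥0∞} (hs : Seg G u g)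
    (hg : Measurable g) (hu : Measurable u) (hi : IntegrableOn u G) {x x₀ : EE n}
    {L : ℝ} {γ : ℝ → EE n} (hL : 0 ≤ L) (hγ : LipschitzWith 1 γ) (h0 : γ 0 = x) (hγL : γ L = x₀)
    (hG : ∀ t, γ t ∈ G) (hcost : ∫ t in 0..L, 1 / δ (γ t) ≤ (1 / β) * Real.log (1 / δ x) + C)
    (hcig : ∀ s ∈ Icc 0 L, s ≤ C * (δ (γ s)) ^ β) :
    ‖mm δ u x - mm δ u x₀‖ₑ ≤ (ENNReal.ofReal (1 / β / Real.log (9 / 8)) * ENNReal.ofReal (Real.log (1 / δ x)) +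
      ENNReal.ofReal (C / Real.log (9 / 8) + 2)) *
      ((32 ^ n * (om n)⁻¹ * ENNReal.ofReal (2 ^ n * D ^ 2)) * YY G δ β (2 * (C + D)) g x) ^ (1 / 2 : ℝ) := by
  set c := Real.log (9 / 8) with hc
  have hc0 : 0 < c := Real.log_pos (by norm_num)
  set Q := (32 ^ n * (om n)⁻¹ * ENNReal.ofReal (2 ^ n * D ^ 2)) * YY G δ β (2 * (C + D)) g x with hQ
  have hstep : ∀ s ∈ Icc 0 L, ∀ t ∈ Icc 0 L, s ≤ t → ∫ r in s..t, 1 / δ (γ r) ≤ c →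
      ‖mm δ u (γ s) - mm δ u (γ t)‖ₑ ^ 2 ≤ Q := by
    intro s hs' t ht hst hint
    have hd := h.pos _ (hG s)
    apply chain_step_Y hn h hβ0 hβ1 hβ2 hC hs hg hu hi (hG s) (hG t)
    · refine (lip_sub hγ hst).trans ?_
      have := (log_le_cost h hγ hG hst).trans hint
      rw [hc, Real.log_le_log_iff (div_pos (by linarith) hd) (by norm_num), div_le_iff₀ hd] at this
      linarith
    · refine le_trans ?_ (hcig s hs')
      have := lip_sub hγ hs'.1
      rw [h0] at this; linarith
  have hcc := h.cont1 hγ.continuous hG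
  by_cases hQt : Q = ⊤
  · rw [hQt, ENNReal.top_rpow_of_pos (by norm_num), ENNReal.mul_top]
    · exact le_top
    · apply ne_of_gt
      refine lt_of_lt_of_le ?_ le_add_self
      rw [ENNReal.ofReal_pos]; positivity
  set K := (Q ^ (1 / 2 : ℝ)).toReal with hK
  have hKt : Q ^ (1 / 2 : ℝ) ≠ ⊤ := ENNReal.rpow_ne_top_of_nonneg (by norm_num) hQt
  have hK0 : 0 ≤ K := ENNReal.toReal_nonneg
  have hQK : Q ^ (1 / 2 : ℝ) = ENNReal.ofReal K := (ENNReal.ofReal_toReal hKt).symm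
  set cost := ∫ t in 0..L, 1 / δ (γ t) with hcostd
  have hcost0 : 0 ≤ cost := intervalIntegral.integral_nonneg hL fun s _ => one_div_nonneg.2 (h.pos _ (hG s)).le
  have hch := chain_lemma (f := fun s => mm δ u (γ s)) (K := K) hcc hc0 (L := L) (by
    intro s hs' t ht hst hint
    have := hstep s hs' t ht hst hint
    have h2 : ‖mm δ u (γ s) - mm δ u (γ t)‖ₑ ≤ Q ^ (1 / 2 : ℝ) := by
      rw [one_div, ENNReal.le_rpow_inv_iff (by norm_num)]
      simpa using this
    rw [hQK, ← ofReal_norm, ENNReal.ofReal_le_ofReal_iff hK0] at h2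
    exact h2) ⌈cost / c⌉₊ L ⟨hL, le_rfl⟩ (by
      rw [← hcostd, ← div_le_iff₀ hc0]
      have := Nat.le_ceil (cost / c)
      linarith)
  simp only [h0, hγL] at hch
  have hceil := (Nat.ceil_lt_add_one (show 0 ≤ cost / c by positivity)).le
  have hle : (⌈cost / c⌉₊ : ℝ) + 1 ≤ 1 / β / c * Real.log (1 / δ x) + (C / c + 2) := by
    have : cost / c ≤ ((1 / β) * Real.log (1 / δ x) + C) / c := by gcongr
    have e : ((1 / β) * Real.log (1 / δ x) + C) / c = 1 / β / c * Real.log (1 / δ x) + C / c := by ring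
    linarith
  rw [hQK, ← ofReal_norm, Real.norm_eq_abs]
  calc ENNReal.ofReal |mm δ u x - mm δ u x₀| ≤ ENNReal.ofReal ((1 / β / c * Real.log (1 / δ x) + (C / c + 2)) * K) := by
        apply ENNReal.ofReal_le_ofReal
        refine hch.trans ?_
        gcongr
    _ = ENNReal.ofReal (1 / β / c * Real.log (1 / δ x) + (C / c + 2)) * ENNReal.ofReal K :=
        ENNReal.ofReal_mul' hK0
    _ ≤ _ := by
        gcongr
        refine ENNReal.ofReal_add_le.trans ?_
        rw [ENNReal.ofReal_mul (by positivity)]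

theorem cs_Icc {f : ℝ → ℝ≥0∞} (hf : Measurable f) :
    (∫⁻ t in Icc (0:ℝ) 1, f t) ^ 2 ≤ ∫⁻ t in Icc (0:ℝ) 1, f t ^ 2 := by
  have := ENNReal.lintegral_mul_le_Lp_mul_Lq (volume.restrict (Icc (0:ℝ) 1)) Real.HolderConjugate.two_two
      (f := f) (g := fun _ => 1) (by fun_prop) (by fun_prop)
  simp only [Pi.mul_apply, mul_one, ENNReal.one_rpow, lintegral_one, Measure.restrict_apply_univ] at this
  calc _ ≤ _ := pow_le_pow_left' this 2
    _ = _ := by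
        rw [mul_pow, ← ENNReal.rpow_natCast, ← ENNReal.rpow_natCast, ← ENNReal.rpow_mul, ← ENNReal.rpow_mul]
        simp

theorem seg_of {n : ℕ} {G : Set (EE n)} (hGo : IsOpen G) {u : EE n → ℝ} (hu : DifferentiableOn ℝ u G) :
    Seg G (G.indicator u) (G.indicator fun z => ‖fderiv ℝ u z‖ₑ ^ 2) := by
  intro x w hseg
  have hx : x ∈ G := by simpa using hseg 0 (by simp)
  have hxw : x + w ∈ G := by simpa using hseg 1 (by simp)
  rw [indicator_of_mem hx, indicator_of_mem hxw]
  have hg : ∫⁻ t in Icc (0:ℝ) 1, G.indicator (fun z => ‖fderiv ℝ u z‖ₑ ^ 2) (x + t • w) =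
      ∫⁻ t in Icc (0:ℝ) 1, ‖fderiv ℝ u (x + t • w)‖ₑ ^ 2 := by
    apply setLIntegral_congr_fun measurableSet_Icc
    intro t ht
    exact indicator_of_mem (hseg t ht) _
  rw [hg]
  have hm : Measurable fun t : ℝ => ‖fderiv ℝ u (x + t • w)‖ₑ := by
    have := (measurable_fderiv ℝ u).enorm
    exact this.comp (by fun_prop : Measurable fun t : ℝ => x + t • w)
  have hm2 : Measurable fun t : ℝ => fderiv ℝ u (x + t • w) w :=
    (measurable_fderiv_apply_const ℝ u w).comp (by fun_prop : Measurable fun t : ℝ => x + t • w)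
  have hcs := cs_Icc hm
  set J := ∫⁻ t in Icc (0:ℝ) 1, ‖fderiv ℝ u (x + t • w)‖ₑ ^ 2 with hJ
  rcases eq_or_ne w 0 with rfl | hw
  · simp
  by_cases hJt : J = ⊤
  · rw [hJt, ENNReal.mul_top (by simp [hw])]; exact le_top
  have hle : ∫⁻ t in Icc (0:ℝ) 1, ‖fderiv ℝ u (x + t • w) w‖ₑ ≤
      ‖w‖ₑ * ∫⁻ t in Icc (0:ℝ) 1, ‖fderiv ℝ u (x + t • w)‖ₑ := by
    rw [← lintegral_const_mul _ hm]
    apply lintegral_mono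
    intro t
    beta_reduce
    rw [mul_comm]
    exact ContinuousLinearMap.le_opENorm _ _
  have hfin : ∫⁻ t in Icc (0:ℝ) 1, ‖fderiv ℝ u (x + t • w)‖ₑ ≠ ⊤ := by
    intro ht
    rw [ht] at hcs
    simp at hcs
    exact hJt hcs
  have hint : IntervalIntegrable (fun t : ℝ => fderiv ℝ u (x + t • w) w) volume 0 1 := by
    rw [intervalIntegrable_iff_integrableOn_Icc_of_le zero_le_one]
    refine ⟨hm2.aestronglyMeasurable, ?_⟩
    rw [hasFiniteIntegral_iff_enorm]
    exact hle.trans_lt (ENNReal.mul_lt_top (by simp) hfin.lt_top)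
  have hder : ∀ t ∈ uIcc (0:ℝ) 1, HasDerivAt (fun t : ℝ => u (x + t • w)) (fderiv ℝ u (x + t • w) w) t := by
    intro t ht
    rw [uIcc_of_le zero_le_one] at ht
    have h1 : HasFDerivAt u (fderiv ℝ u (x + t • w)) (x + t • w) :=
      (hu.differentiableAt (hGo.mem_nhds (hseg t ht))).hasFDerivAt
    have h2 : HasDerivAt (fun t : ℝ => x + t • w) w t := by
      simpa using ((hasDerivAt_id t).smul_const w).const_add x
    exact h1.comp_hasDerivAt t h2
  have hftc := intervalIntegral.integral_eq_sub_of_hasDerivAt hder hint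
  simp only [one_smul, zero_smul, add_zero] at hftc
  have : ‖u x - u (x + w)‖ₑ ≤ ‖w‖ₑ * ∫⁻ t in Icc (0:ℝ) 1, ‖fderiv ℝ u (x + t • w)‖ₑ := by
    rw [← enorm_neg, neg_sub, ← hftc, intervalIntegral.integral_of_le zero_le_one, ← integral_Icc_eq_integral_Ioc]
    exact (enorm_integral_le_lintegral_enorm _).trans hle
  calc _ ≤ _ := pow_le_pow_left' this 2
    _ = ‖w‖ₑ ^ 2 * (∫⁻ t in Icc (0:ℝ) 1, ‖fderiv ℝ u (x + t • w)‖ₑ) ^ 2 := mul_pow _ _ _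
    _ ≤ _ := by gcongr

theorem ZZ_meas {n : ℕ} {G : Set (EE n)} {δ : EE n → ℝ} {D : ℝ} (h : DomF G δ D)
    {u : EE n → ℝ} (hu : Measurable u) : Measurable (ZZ δ u) := by
  have hδ := h.cont.measurable
  have key : ∀ F : EE n × EE n → ℝ≥0∞, Measurable F →
      Measurable fun x => ∫⁻ y in Metric.ball x (δ x / 4), F (x, y) := by
    intro F hF
    have e : ∀ x, ∫⁻ y in Metric.ball x (δ x / 4), F (x, y) =
        ∫⁻ y, indicator {p : EE n × EE n | dist p.2 p.1 < δ p.1 / 4} F (x, y) := by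
      intro x
      rw [← lintegral_indicator measurableSet_ball]
      apply lintegral_congr
      intro y
      simp [indicator]
    simp_rw [e]
    apply Measurable.lintegral_prod_right'
    exact hF.indicator (measurableSet_lt (by fun_prop) (by fun_prop))
  have h1 := key (fun p => ‖u p.1 - u p.2‖ₑ ^ 2) (by fun_prop)
  have h2 := key (fun _ => 1) (by fun_prop)
  simp only [lintegral_one, Measure.restrict_apply_univ] at h2
  exact h2.inv.mul h1

theorem MM_rmoment {n : ℕ} {G : Set (EE n)} {δ : EE n → ℝ} {D : ℝ} (h : DomF G δ D) {lam : ℝ}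
    (hlam : 1 ≤ lam) {x₀ : EE n} (hx0 : x₀ ∈ G) (r : ℝ) :
    ∫⁻ x in G, (1 + MM G δ lam D x) ^ r ≠ ⊤ := by
  obtain ⟨s, hs⟩ := exists_nat_ge r
  obtain ⟨C, hC, hCb⟩ := MM_moment h hlam s
  have hD := h.one
  have hGb : G ⊆ Metric.ball x₀ (D + 1) := by
    intro y hy
    rw [Metric.mem_ball]
    linarith [h.diam y hy x₀ hx0]
  have hb := hCb x₀ (D + 1) D (by linarith) (by linarith)
  apply ne_top_of_le_ne_top (b := 2 ^ s * (volume (Metric.ball x₀ (D + 1)) + C * ENNReal.ofReal (D + 1) ^ n))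
  · have : volume (Metric.ball x₀ (D + 1)) ≠ ⊤ := measure_ball_lt_top.ne
    finiteness
  calc ∫⁻ x in G, (1 + MM G δ lam D x) ^ r ≤ ∫⁻ x in Metric.ball x₀ (D + 1), (1 + MM G δ lam D x) ^ r :=
        lintegral_mono_set hGb
    _ ≤ ∫⁻ x in Metric.ball x₀ (D + 1), 2 ^ s * (1 + MM G δ lam D x ^ s) := by
        apply lintegral_mono
        intro x
        beta_reduce
        set M := MM G δ lam D x
        calc (1 + M) ^ r ≤ (1 + M) ^ (s : ℝ) := ENNReal.rpow_le_rpow_of_exponent_le le_self_add hs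
          _ = (1 + M) ^ s := by simp
          _ ≤ (2 * max 1 M) ^ s := by
              gcongr
              rw [two_mul]
              exact add_le_add (le_max_left _ _) (le_max_right _ _)
          _ = 2 ^ s * (max 1 M) ^ s := mul_pow _ _ _
          _ ≤ _ := by
              gcongr
              rcases max_cases 1 M with h | h
              · rw [h.1, one_pow]; exact le_self_add
              · rw [h.1]; exact le_add_self
    _ = 2 ^ s * (volume (Metric.ball x₀ (D + 1)) + ∫⁻ x in Metric.ball x₀ (D + 1), MM G δ lam D x ^ s) := by
        rw [lintegral_const_mul', lintegral_add_left (by fun_prop), lintegral_one, Measure.restrict_apply_univ]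
        finiteness
    _ ≤ _ := by gcongr

theorem E1 {n : ℕ} (hn : 2 ≤ n) {G : Set (EE n)} {δ : EE n → ℝ} {D : ℝ} (h : DomF G δ D)
    {β C : ℝ} (hβ0 : 0 < β) (hβ1 : 1 - 2 / (n:ℝ) ≤ β) (hβ2 : β ≤ 1) (hC : 0 < C) {x₀ : EE n} (hx0 : x₀ ∈ G)
    (hcur : ∀ x ∈ G, ∃ (L : ℝ) (γ : ℝ → EE n), 0 ≤ L ∧ LipschitzWith 1 γ ∧ γ 0 = x ∧
      γ L = x₀ ∧ (∀ t, γ t ∈ G) ∧ ∫ t in 0..L, 1 / δ (γ t) ≤ (1 / β) * Real.log (1 / δ x) + C ∧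
      ∀ s ∈ Icc 0 L, s ≤ C * (δ (γ s)) ^ β) {q : ℝ} (hq : 1 ≤ q) (hq2 : q < 2) :
    ∃ K : ℝ≥0∞, K ≠ ⊤ ∧ ∀ (u : EE n → ℝ) (g : EE n → ℝ≥0∞), Measurable u → Measurable g →
      IntegrableOn u G → Seg G u g →
      ∫⁻ x in G, ‖u x - mm δ u x₀‖ₑ ^ q ≤ K * (∫⁻ x in G, g x) ^ (q / 2) := by
  have hD := h.one
  have hq0 : 0 < q := by linarith
  have hGm := h.isOpen.measurableSet
  obtain ⟨A, lam, hA, hlam, hlog⟩ := log_le_MM h hβ0 hC hx0 (fun x hx => by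
    obtain ⟨L, γ, a1, a2, a3, a4, a5, a6, a7⟩ := hcur x hx
    exact ⟨L, γ, a1, a2, a3, a4, a5, a6⟩)
  set A1 := ENNReal.ofReal (1 / β / Real.log (9 / 8)) with hA1
  set A2 := ENNReal.ofReal (C / Real.log (9 / 8) + 2) with hA2
  set K1 := (32 : ℝ≥0∞) ^ n * (om n)⁻¹ * ENNReal.ofReal (2 ^ n * D ^ 2) with hK1
  have hK1t : K1 ≠ ⊤ := by
    have : (om n)⁻¹ ≠ ⊤ := ENNReal.inv_ne_top.2 (om_ne_zero n)
    finiteness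
  set B := 1 + A1 * A + A2 with hB
  have hBt : B ≠ ⊤ := by finiteness
  set M := MM G δ lam D with hM
  have hMm : Measurable M := (h.MM_meas lam).comp (by fun_prop : Measurable fun x => (D, x))
  set p' := 2 / (2 - q) with hp'
  have hconj : p'.HolderConjugate (2 / q) := by
    have : 0 < 2 - q := by linarith
    rw [Real.holderConjugate_iff]
    constructor
    · rw [hp', lt_div_iff₀ this]; linarith
    · rw [hp']; field_simp; ring
  have hmom := MM_rmoment h hlam hx0 (q * p')
  rw [← hM] at hmom
  set T := ∫⁻ x in G, (1 + M x) ^ (q * p') with hT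
  set K2 := ENNReal.ofReal D ^ 2 * (ENNReal.ofReal (5 / 2) ^ n) + K1 * (ENNReal.ofReal (2 * (C + D)) ^ n * om n) with hK2
  have hK2t : K2 ≠ ⊤ := by
    have := om_ne_top n
    finiteness
  have hpp : 0 < 1 / p' := by have := hconj.pos; positivity
  refine ⟨B ^ q * (T ^ (1 / p') * K2 ^ (q / 2)), ?_, ?_⟩
  · apply ENNReal.mul_ne_top (ENNReal.rpow_ne_top_of_nonneg hq0.le hBt)
    exact ENNReal.mul_ne_top (ENNReal.rpow_ne_top_of_nonneg hpp.le hmom) (ENNReal.rpow_ne_top_of_nonneg (by positivity) hK2t)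
  intro u g hu hg hi hs
  set S : EE n → ℝ≥0∞ := fun x => ZZ δ u x + K1 * YY G δ β (2 * (C + D)) g x with hS
  have hYm := YY_meas h β (2 * (C + D)) hg
  have hZm := ZZ_meas h hu
  have hSm : Measurable S := by fun_prop
  have hSint : ∫⁻ x in G, S x ≤ K2 * ∫⁻ x in G, g x := by
    rw [hS, lintegral_add_left hZm, lintegral_const_mul _ hYm, hK2, add_mul]
    refine add_le_add (ZZ_int h hs hg hu) ?_
    rw [mul_assoc K1]
    refine mul_le_mul_right ?_ _
    exact (setLIntegral_le_lintegral _ _).trans (YY_int h β (by linarith) hg)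
  have hpt : ∀ x ∈ G, ‖u x - mm δ u x₀‖ₑ ≤ B * ((1 + M x) * S x ^ (1 / 2 : ℝ)) := by
    intro x hx
    obtain ⟨L, γ, a1, a2, a3, a4, a5, a6, a7⟩ := hcur x hx
    have c1 := chain_bound hn h hβ0 hβ1 hβ2 hC hs hg hu hi a1 a2 a3 a4 a5 a6 a7
    rw [← hA1, ← hA2, ← hK1] at c1
    have c2 : ‖u x - mm δ u x‖ₑ ≤ ZZ δ u x ^ (1 / 2 : ℝ) := by
      rw [one_div, ENNReal.le_rpow_inv_iff (by norm_num)]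
      simpa using mm_ZZ h hu hi hx
    have c3 : ZZ δ u x ^ (1 / 2 : ℝ) ≤ S x ^ (1 / 2 : ℝ) := ENNReal.rpow_le_rpow le_self_add (by norm_num)
    have c4 : (K1 * YY G δ β (2 * (C + D)) g x) ^ (1 / 2 : ℝ) ≤ S x ^ (1 / 2 : ℝ) :=
      ENNReal.rpow_le_rpow le_add_self (by norm_num)
    have hl := hlog x hx
    set l := ENNReal.ofReal (Real.log (1 / δ x))
    calc ‖u x - mm δ u x₀‖ₑ = ‖(u x - mm δ u x) + (mm δ u x - mm δ u x₀)‖ₑ := by rw [sub_add_sub_cancel]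
      _ ≤ ‖u x - mm δ u x‖ₑ + ‖mm δ u x - mm δ u x₀‖ₑ := enorm_add_le _ _
      _ ≤ S x ^ (1 / 2 : ℝ) + (A1 * (A + A * M x) + A2) * S x ^ (1 / 2 : ℝ) := by
          refine add_le_add (c2.trans c3) (c1.trans ?_)
          exact mul_le_mul' (add_le_add (mul_le_mul_right hl _) le_rfl) c4
      _ = (1 + A1 * (A + A * M x) + A2) * S x ^ (1 / 2 : ℝ) := by ring
      _ ≤ (B * (1 + M x)) * S x ^ (1 / 2 : ℝ) := by
          refine mul_le_mul_left ?_ _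
          calc 1 + A1 * (A + A * M x) + A2 ≤ 1 + A1 * (A + A * M x) + A2 + (1 + A2) * M x := le_self_add
            _ = _ := by rw [hB]; ring
      _ = _ := mul_assoc _ _ _
  have hhold := ENNReal.lintegral_mul_le_Lp_mul_Lq (volume.restrict G) hconj
      (f := fun x => (1 + M x) ^ q) (g := fun x => S x ^ (q / 2)) (by fun_prop) (by fun_prop)
  calc ∫⁻ x in G, ‖u x - mm δ u x₀‖ₑ ^ q
      ≤ ∫⁻ x in G, B ^ q * ((fun x => (1 + M x) ^ q) * (fun x => S x ^ (q / 2))) x := by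
        apply setLIntegral_mono' hGm
        intro x hx
        refine (ENNReal.rpow_le_rpow (hpt x hx) hq0.le).trans (le_of_eq ?_)
        rw [ENNReal.mul_rpow_of_nonneg _ _ hq0.le, ENNReal.mul_rpow_of_nonneg _ _ hq0.le, ← ENNReal.rpow_mul]
        simp only [Pi.mul_apply]
        congr 3; ring
    _ = B ^ q * ∫⁻ x in G, ((fun x => (1 + M x) ^ q) * (fun x => S x ^ (q / 2))) x := by
        rw [lintegral_const_mul']
        exact ENNReal.rpow_ne_top_of_nonneg hq0.le hBt
    _ ≤ B ^ q * (T ^ (1 / p') * (K2 * ∫⁻ x in G, g x) ^ (q / 2)) := by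
        refine mul_le_mul_right (hhold.trans ?_) _
        simp_rw [← ENNReal.rpow_mul]
        rw [← hT, show q / 2 * (2 / q) = 1 by field_simp, show 1 / (2 / q) = q / 2 by field_simp]
        simp_rw [ENNReal.rpow_one]
        gcongr
    _ = _ := by
        rw [ENNReal.mul_rpow_of_nonneg _ _ (by positivity)]; ring

theorem final_poinc {n : ℕ} (hn : 2 ≤ n) (G : Set (EE n))
    (hGo : IsOpen G) (hGc : IsConnected G) (hGb : Bornology.IsBounded G)
    (β : ℝ) (hβ0 : 0 < β) (hβ1 : 1 - 2 / (n:ℝ) ≤ β) (hβ2 : β ≤ 1)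
    (hqhbc : QHBC G β) (q : ℝ) (hq : 1 ≤ q) (hq2 : q < 2) : SupportsPoincare G q 2 := by
  have hq0 : 0 < q := by linarith
  obtain ⟨D, h⟩ := domF_of hn G hGo hGc hGb
  obtain ⟨x₀, hx0, c, hQ⟩ := hqhbc
  obtain ⟨C, hC, hcur⟩ := good_curves hβ0 h hGc hx0 hQ
  set δ : EE n → ℝ := fun x => Metric.infDist x (frontier G) with hδ
  have hGm := hGo.measurableSet
  have hV0 : volume G ≠ 0 := (hGo.measure_pos volume ⟨x₀, hx0⟩).ne'
  have hVt : volume G ≠ ⊤ := hGb.measure_lt_top.ne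
  obtain ⟨K, hKt, hK⟩ := E1 hn h hβ0 hβ1 hβ2 hC hx0 hcur hq hq2
  obtain ⟨K', hKt', hK'⟩ := E1 hn h hβ0 hβ1 hβ2 hC hx0 hcur le_rfl one_lt_two
  set V := volume G with hV
  set Q := 2 ^ q * (K + V * (V⁻¹ * K') ^ q) with hQd
  have hVi : V⁻¹ ≠ ⊤ := ENNReal.inv_ne_top.2 hV0
  have hQt : Q ≠ ⊤ := by
    apply ENNReal.mul_ne_top (ENNReal.rpow_ne_top_of_nonneg hq0.le (by simp))
    apply ENNReal.add_ne_top.2 ⟨hKt, ENNReal.mul_ne_top hVt (ENNReal.rpow_ne_top_of_nonneg hq0.le (by finiteness))⟩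
  refine ⟨(Q ^ (1 / q)).toReal, ?_⟩
  intro u hu hi hgi
  set v := G.indicator u with hv
  set g : EE n → ℝ≥0∞ := G.indicator fun z => ‖fderiv ℝ u z‖ₑ ^ 2 with hg
  have hgm : Measurable g := ((measurable_fderiv ℝ u).enorm.pow_const 2).indicator hGm
  have hvm : Measurable v := by
    have : Measurable (G.indicator u) := by
      classical
      have h1 : Measurable (G.piecewise u 0) :=
        ContinuousOn.measurable_piecewise hu.continuousOn continuousOn_const hGm
      rwa [piecewise_eq_indicator] at h1
    exact this
  have hvi : IntegrableOn v G := hi.congr_fun (fun x hx => (indicator_of_mem hx _).symm) hGm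
  have hseg : Seg G v g := seg_of hGo hu
  have k1 := hK v g hvm hgm hvi hseg
  have k2 := hK' v g hvm hgm hvi hseg
  set a := mm δ v x₀ with ha
  set J := ∫⁻ x in G, g x with hJ
  have hav : (∫ y in G, u y) / V.toReal = ⨍ y in G, v y := by
    rw [setAverage_eq, smul_eq_mul, div_eq_inv_mul, measureReal_def]
    congr 1
    exact setIntegral_congr_fun hGm fun x hx => (indicator_of_mem hx _).symm
  set m := ⨍ y in G, v y with hm
  have h1 : a - m = ⨍ y in G, (a - v y) := by
    rw [hm, setAverage_eq, setAverage_eq, integral_sub _ hvi, setIntegral_const, smul_sub, smul_smul,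
      inv_mul_cancel₀, one_smul]
    · rw [measureReal_def]; exact (ENNReal.toReal_pos hV0 hVt).ne'
    · exact integrableOn_const hVt
  have h2 : ‖a - m‖ₑ ≤ V⁻¹ * K' * J ^ (1 / 2 : ℝ) := by
    rw [h1, setAverage_eq, enorm_smul, mul_assoc]
    have : ‖(volume.real G)⁻¹‖ₑ = V⁻¹ := by
      rw [enorm_inv, measureReal_def, Real.enorm_eq_ofReal ENNReal.toReal_nonneg, ENNReal.ofReal_toReal hVt]
      · exact (ENNReal.toReal_pos hV0 hVt).ne'
    rw [this]
    refine mul_le_mul_right ?_ _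
    refine (enorm_integral_le_lintegral_enorm _).trans (le_trans (le_of_eq ?_) k2)
    apply lintegral_congr
    intro x
    rw [ENNReal.rpow_one, ← enorm_neg, neg_sub]
  have h3 : ∫⁻ x in G, ‖v x - m‖ₑ ^ q ≤ Q * J ^ (q / 2) := by
    calc ∫⁻ x in G, ‖v x - m‖ₑ ^ q ≤ ∫⁻ x in G, 2 ^ q * (‖v x - a‖ₑ ^ q + ‖a - m‖ₑ ^ q) := by
          apply lintegral_mono
          intro x
          beta_reduce
          calc ‖v x - m‖ₑ ^ q = ‖(v x - a) + (a - m)‖ₑ ^ q := by rw [sub_add_sub_cancel]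
            _ ≤ (‖v x - a‖ₑ + ‖a - m‖ₑ) ^ q := ENNReal.rpow_le_rpow (enorm_add_le _ _) hq0.le
            _ ≤ (2 * max ‖v x - a‖ₑ ‖a - m‖ₑ) ^ q := by
                gcongr
                rw [two_mul]
                exact add_le_add (le_max_left _ _) (le_max_right _ _)
            _ = 2 ^ q * (max ‖v x - a‖ₑ ‖a - m‖ₑ) ^ q := ENNReal.mul_rpow_of_nonneg _ _ hq0.le
            _ ≤ _ := by
                gcongr
                rcases max_cases ‖v x - a‖ₑ ‖a - m‖ₑ with h | h
                · rw [h.1]; exact le_self_add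
                · rw [h.1]; exact le_add_self
      _ = 2 ^ q * ((∫⁻ x in G, ‖v x - a‖ₑ ^ q) + V * ‖a - m‖ₑ ^ q) := by
          rw [lintegral_const_mul' _ _ (ENNReal.rpow_ne_top_of_nonneg hq0.le (by simp)),
            lintegral_add_right _ (by fun_prop), lintegral_const, Measure.restrict_apply_univ, mul_comm V]
      _ ≤ 2 ^ q * (K * J ^ (q / 2) + V * (V⁻¹ * K' * J ^ (1 / 2 : ℝ)) ^ q) := by
          gcongr
      _ = _ := by
          rw [ENNReal.mul_rpow_of_nonneg _ _ hq0.le, ← ENNReal.rpow_mul, show 1 / 2 * q = q / 2 by ring, hQd]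
          ring
  have hL : ∫ x in G, |u x - (∫ y in G, u y) / V.toReal| ^ q = (∫⁻ x in G, ‖v x - m‖ₑ ^ q).toReal := by
    rw [hav]
    rw [show ∫ x in G, |u x - m| ^ q = ∫ x in G, |v x - m| ^ q from
      setIntegral_congr_fun hGm fun x hx => by simp only [hv, indicator_of_mem hx]]
    rw [integral_eq_lintegral_of_nonneg_ae (Eventually.of_forall fun x => by positivity)
      (by
        have h5 : Measurable fun x => |v x - m| := (hvm.sub_const m).norm
        exact (h5.pow_const q).aestronglyMeasurable)]
    congr 1
    apply lintegral_congr
    intro x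
    rw [← ENNReal.ofReal_rpow_of_nonneg (abs_nonneg _) hq0.le, ← Real.norm_eq_abs, ofReal_norm]
  have hR : ∫ x in G, ‖fderivWithin ℝ u G x‖ ^ (2:ℝ) = J.toReal := by
    rw [integral_eq_lintegral_of_nonneg_ae (Eventually.of_forall fun x => by positivity) hgi.1]
    congr 1
    apply setLIntegral_congr_fun hGm
    intro x hx
    simp only [hg]
    rw [indicator_of_mem hx, fderivWithin_of_isOpen hGo hx, ← ENNReal.ofReal_rpow_of_nonneg (norm_nonneg _) (by norm_num),
      ofReal_norm]
    norm_num
  have hJt : J ≠ ⊤ := by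
    have h4 := hgi.2
    rw [hasFiniteIntegral_iff_enorm] at h4
    refine ne_of_lt (lt_of_le_of_lt (le_of_eq ?_) h4)
    apply setLIntegral_congr_fun hGm
    intro x hx
    simp only [hg]
    rw [indicator_of_mem hx, fderivWithin_of_isOpen hGo hx, Real.enorm_eq_ofReal (by positivity), ← ENNReal.ofReal_rpow_of_nonneg (norm_nonneg _) (by norm_num),
      ofReal_norm]
    norm_num
  rw [hL, hR, ENNReal.toReal_rpow, ENNReal.toReal_rpow, ← ENNReal.toReal_mul]
  apply ENNReal.toReal_mono
  · exact ENNReal.mul_ne_top (ENNReal.rpow_ne_top_of_nonneg (by positivity) hQt)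
      (ENNReal.rpow_ne_top_of_nonneg (by norm_num) hJt)
  · refine (ENNReal.rpow_le_rpow h3 (by positivity)).trans (le_of_eq ?_)
    rw [ENNReal.mul_rpow_of_nonneg _ _ (by positivity), ← ENNReal.rpow_mul]
    congr 2
    field_simp

end Helpers

/-- Let `G ⊂ ℝⁿ` be a bounded domain satisfying a `β`-quasihyperbolic
boundary condition with `1 - 2/n ≤ β ≤ 1` and let `1 ≤ q < 2`. If the Neumann problem
for `L_A` on `G` is `q`-solvable precisely when `G` supports a `(q,2)`-Poincaré
inequality, then the Neumann problem on `G` is `q`-solvable. -/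
theorem stmt_19 (n : ℕ) (hn : 2 ≤ n) (G : Set (EuclideanSpace ℝ (Fin n)))
    (hGo : IsOpen G) (hGc : IsConnected G) (hGb : Bornology.IsBounded G)
    (β : ℝ) (hβ0 : 0 < β) (hβ1 : 1 - 2 / (n:ℝ) ≤ β) (hβ2 : β ≤ 1)
    (hqhbc : QHBC G β)
    (q : ℝ) (hq : 1 ≤ q) (hq2 : q < 2)
    (NeumannSolvable : Prop)
    (hchar : NeumannSolvable ↔ SupportsPoincare G q 2) :
    NeumannSolvable := by
  exact hchar.2 (final_poinc hn G hGo hGc hGb β hβ0 hβ1 hβ2 hqhbc q hq hq2)
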